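/- For every x in the open interval (a,b), the series ∑_{n=0}^∞ c_n y_n(x) converges to f(x); moreover, the convergence is uniform on every compact subset of (a,b). -/

import Mathlib

/-- `(lam, y)` is an eigenpair of the Sturm–Liouville problem
`-y'' + q y = lam y` on `[a,b]` with separated boundary conditions
`y(a) cos α + y'(a) sin α = 0`, `y(b) cos β + y'(b) sin β = 0`:
`y` is twice continuously differentiable on `[a,b]` and not identically zero there. -/
def IsSLEigenpair (a b : ℝ) (q : ℝ → ℝ) (α β : ℝ) (lam : ℝ) (y : ℝ → ℝ) : Prop :=
  ∃ y' y'' : ℝ → ℝ,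
    (∀ x ∈ Set.Icc a b, HasDerivWithinAt y (y' x) (Set.Icc a b) x) ∧
    (∀ x ∈ Set.Icc a b, HasDerivWithinAt y' (y'' x) (Set.Icc a b) x) ∧
    ContinuousOn y'' (Set.Icc a b) ∧
    (∃ x ∈ Set.Icc a b, y x ≠ 0) ∧
    (∀ x ∈ Set.Icc a b, -(y'' x) + q x * y x = lam * y x) ∧
    y a * Real.cos α + y' a * Real.sin α = 0 ∧
    y b * Real.cos β + y' b * Real.sin β = 0

/-!
For large `κ` the resolvent `R κ = (-D² + q + κ²)⁻¹` of the boundary value problem exists, and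
`κ² R κ` is an approximate identity away from the endpoints: its kernel is close to
`κ e^{-κ|x-t|} / 2`, while the boundary corrections decay like `e^{-κ(x-a)}` and `e^{-κ(b-x)}`.
Hence `p(κ² R κ) f → f` locally uniformly in `(a, b)` for every polynomial `p` with `p(1) = 1`.

In the eigenbasis `κ² R κ` acts as the multiplier `u_n = κ² / (λ_n + κ²)`, and for `κ² = λ_N` the
`N`-th partial sum of the expansion is the multiplier `1_{u_n > 1/2}`. Following Karamata's proof of
the Hardy–Littlewood Tauberian theorem, choose `p` with `p(1) = 1` and
`|1_{u > 1/2} - p(u)| ≤ τ u (1 - u) + 1_{|u - 1/2| < τ}` on `[0, 1]`. Eigenfunction asymptotics and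
bounded variation give `|c_n| ‖y_n‖ = O(λ_n^{-1/2})`, and the frequencies `√λ_n` are eventually
`δ`-separated, so the partial sum differs from `p(κ² R κ) f` by `O(τ)` uniformly on `[a, b]`.
-/

namespace SturmLiouville

open Set Filter Topology MeasureTheory
open scoped InnerProductSpace

/-! ### Ordinary differential equations -/
section ODE

theorem integral_eq_sub_of_hasDerivWithinAt {E : Type*} [NormedAddCommGroup E] [NormedSpace ℝ E]
    [CompleteSpace E] {F F' : ℝ → E} {c d : ℝ} (hcd : c ≤ d)
    (hF : ∀ x ∈ Icc c d, HasDerivWithinAt F (F' x) (Icc c d) x)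
    (hF' : ContinuousOn F' (Icc c d)) : ∫ x in c..d, F' x = F d - F c :=
  intervalIntegral.integral_eq_sub_of_hasDerivAt_of_le hcd
    (fun x hx => (hF x hx).continuousWithinAt)
    (fun x hx => (hF x (Ioo_subset_Icc_self hx)).hasDerivAt (Icc_mem_nhds hx.1 hx.2))
    (hF'.intervalIntegrable_of_Icc hcd)

theorem monotoneOn_of_hasDerivWithinAt_nonneg {D : Set ℝ} (hD : Convex ℝ D) {F F' : ℝ → ℝ}
    (hF : ∀ x ∈ D, HasDerivWithinAt F (F' x) D x) (hF' : ∀ x ∈ D, 0 ≤ F' x) : MonotoneOn F D := by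
  have hd : ∀ x ∈ interior D, HasDerivAt F (F' x) x := fun x hx =>
    (hF x (interior_subset hx)).hasDerivAt (mem_interior_iff_mem_nhds.1 hx)
  refine monotoneOn_of_deriv_nonneg hD (fun x hx => (hF x hx).continuousWithinAt)
    (fun x hx => (hd x hx).differentiableAt.differentiableWithinAt) fun x hx => ?_
  rw [(hd x hx).deriv]
  exact hF' x (interior_subset hx)

theorem eqOn_zero_of_second_order_ivp {E : Type*} [NormedAddCommGroup E] [NormedSpace ℝ E]
    {a b K : ℝ} {z z' z'' : ℝ → E}
    (hz : ∀ x ∈ Icc a b, HasDerivWithinAt z (z' x) (Icc a b) x)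
    (hz' : ∀ x ∈ Icc a b, HasDerivWithinAt z' (z'' x) (Icc a b) x)
    (hbound : ∀ x ∈ Icc a b, ‖z'' x‖ ≤ K * ‖z x‖) (hza : z a = 0) (hza' : z' a = 0) :
    EqOn z 0 (Icc a b) := by
  have hd : ∀ x ∈ Icc a b,
      HasDerivWithinAt (fun x => (z x, z' x)) (z' x, z'' x) (Icc a b) x :=
    fun x hx => (hz x hx).prodMk (hz' x hx)
  have h0 := eq_zero_of_abs_deriv_le_mul_abs_self_of_eq_zero_right (K := max 1 K)
    (fun x hx => (hd x hx).continuousWithinAt)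
    (fun x hx => (hd x ⟨hx.1, hx.2.le⟩).mono_of_mem_nhdsWithin (Icc_mem_nhdsGE_of_mem hx))
    (by simp [hza, hza']) fun x hx => by
      have h := hbound x ⟨hx.1, hx.2.le⟩
      rw [Prod.norm_mk, Prod.norm_mk]
      refine max_le ?_ (h.trans (mul_le_mul (le_max_right _ _) (le_max_left _ _)
        (norm_nonneg _) (by positivity)))
      calc ‖z' x‖ = 1 * ‖z' x‖ := (one_mul _).symm
        _ ≤ _ := mul_le_mul (le_max_left _ _) (le_max_right _ _) (norm_nonneg _) (by positivity)
  exact fun x hx => congrArg Prod.fst (h0 x hx)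

theorem mul_cosh_le_of_mul_le_second_deriv {κ L : ℝ} (hL : 0 ≤ L) {v v' v'' : ℝ → ℝ}
    (hv : ∀ x ∈ Icc 0 L, HasDerivWithinAt v (v' x) (Icc 0 L) x)
    (hv' : ∀ x ∈ Icc 0 L, HasDerivWithinAt v' (v'' x) (Icc 0 L) x)
    (hineq : ∀ x ∈ Icc 0 L, κ ^ 2 * v x ≤ v'' x) (h0 : 0 ≤ v' 0) :
    v 0 * Real.cosh (κ * L) ≤ v L := by
  have hcosh : ∀ x, HasDerivAt (fun x => Real.cosh (κ * x)) (κ * Real.sinh (κ * x)) x := fun x => by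
    simpa [mul_comm] using ((hasDerivAt_id x).const_mul κ).cosh
  have hsinh : ∀ x, HasDerivAt (fun x => κ * Real.sinh (κ * x)) (κ ^ 2 * Real.cosh (κ * x)) x :=
    fun x => (((hasDerivAt_id x).const_mul κ).sinh.const_mul κ).congr_deriv (by simp; ring)
  have h0mem : (0 : ℝ) ∈ Icc 0 L := left_mem_Icc.2 hL
  -- The Wronskian of `v` and `cosh (κ ·)` increases from `v' 0`, so `v / cosh (κ ·)` increases.
  have hwronskian : MonotoneOn
      (fun x => v' x * Real.cosh (κ * x) - v x * (κ * Real.sinh (κ * x))) (Icc 0 L) := by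
    refine monotoneOn_of_hasDerivWithinAt_nonneg (convex_Icc 0 L)
      (fun x hx => ((hv' x hx).mul (hcosh x).hasDerivWithinAt).sub
        ((hv x hx).mul (hsinh x).hasDerivWithinAt)) fun x hx => ?_
    have := mul_le_mul_of_nonneg_right (hineq x hx) (Real.cosh_pos (κ * x)).le
    linarith
  have hquot : MonotoneOn (fun x => v x / Real.cosh (κ * x)) (Icc 0 L) := by
    refine monotoneOn_of_hasDerivWithinAt_nonneg (convex_Icc 0 L)
      (fun x hx => (hv x hx).div (hcosh x).hasDerivWithinAt (Real.cosh_pos _).ne') fun x hx => ?_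
    have := hwronskian h0mem hx hx.1
    simp only [mul_zero, Real.cosh_zero, mul_one, Real.sinh_zero, sub_zero] at this
    exact div_nonneg (h0.trans this) (sq_nonneg _)
  have := hquot h0mem (right_mem_Icc.2 hL) hL
  simp only [mul_zero, Real.cosh_zero, div_one] at this
  rwa [le_div_iff₀ (Real.cosh_pos _)] at this

theorem le_add_div_cosh_of_second_deriv_eq {κ ε M c η : ℝ} (hη : 0 ≤ η) (hε : 0 ≤ ε)
    {w w' h : ℝ → ℝ}
    (hw : ∀ x ∈ Icc (c - η) (c + η), HasDerivWithinAt w (w' x) (Icc (c - η) (c + η)) x)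
    (hw' : ∀ x ∈ Icc (c - η) (c + η),
      HasDerivWithinAt w' (κ ^ 2 * (w x - h x)) (Icc (c - η) (c + η)) x)
    (hh : ∀ x ∈ Icc (c - η) (c + η), h x ≤ ε) (hl : w (c - η) ≤ M) (hr : w (c + η) ≤ M) :
    w c ≤ ε + M / Real.cosh (κ * η) := by
  have hhalf : ∀ s : ℝ, s * s = 1 → 0 ≤ s * w' c → w (c + s * η) ≤ M →
      w c ≤ ε + M / Real.cosh (κ * η) := by
    intro s hs hpos hM
    have hmaps : MapsTo (fun t => c + s * t) (Icc 0 η) (Icc (c - η) (c + η)) := by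
      rintro t ⟨ht0, htη⟩
      rcases mul_self_eq_one_iff.1 hs with rfl | rfl <;> constructor <;> linarith
    have hline : ∀ t, HasDerivWithinAt (fun t => c + s * t) s (Icc 0 η) t := fun t => by
      simpa using (((hasDerivAt_id t).const_mul s).const_add c).hasDerivWithinAt
    have := mul_cosh_le_of_mul_le_second_deriv (κ := κ) (v := fun t => w (c + s * t) - ε)
      (v' := fun t => w' (c + s * t) * s)
      (v'' := fun t => κ ^ 2 * (w (c + s * t) - h (c + s * t)) * s * s) hη
      (fun t ht => ((hw _ (hmaps ht)).comp t (hline t) hmaps).sub_const ε)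
      (fun t ht => ((hw' _ (hmaps ht)).comp t (hline t) hmaps).mul_const s)
      (fun t ht => by
        rw [mul_assoc _ s s, hs, mul_one]
        exact mul_le_mul_of_nonneg_left (by linarith [hh _ (hmaps ht)]) (sq_nonneg κ))
      (by simpa [mul_comm] using hpos)
    simp only [mul_zero, add_zero] at this
    rw [← sub_le_iff_le_add', le_div_iff₀ (Real.cosh_pos _)]
    linarith
  rcases le_total 0 (w' c) with h0 | h0
  · exact hhalf 1 (by norm_num) (by linarith) (by rwa [one_mul])
  · exact hhalf (-1) (by norm_num) (by linarith) (by rwa [neg_one_mul])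

theorem abs_le_add_div_cosh_of_second_deriv_eq {κ ε M c η : ℝ} (hη : 0 ≤ η) {w w' h : ℝ → ℝ}
    (hw : ∀ x ∈ Icc (c - η) (c + η), HasDerivWithinAt w (w' x) (Icc (c - η) (c + η)) x)
    (hw' : ∀ x ∈ Icc (c - η) (c + η),
      HasDerivWithinAt w' (κ ^ 2 * (w x - h x)) (Icc (c - η) (c + η)) x)
    (hh : ∀ x ∈ Icc (c - η) (c + η), |h x| ≤ ε)
    (hl : |w (c - η)| ≤ M) (hr : |w (c + η)| ≤ M) :
    |w c| ≤ ε + M / Real.cosh (κ * η) := by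
  have hε : 0 ≤ ε := (abs_nonneg _).trans (hh c ⟨by linarith, by linarith⟩)
  refine abs_le'.2 ⟨?_, ?_⟩
  · exact le_add_div_cosh_of_second_deriv_eq hη hε hw hw' (fun x hx => (abs_le.1 (hh x hx)).2)
      (abs_le.1 hl).2 (abs_le.1 hr).2
  · refine le_add_div_cosh_of_second_deriv_eq (w := fun x => -w x) (w' := fun x => -w' x)
      (h := fun x => -h x) hη hε (fun x hx => (hw x hx).neg)
      (fun x hx => (hw' x hx).neg.congr_deriv (by ring)) (fun x hx => ?_) ?_ ?_
    · linarith [(abs_le.1 (hh x hx)).1]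
    · linarith [(abs_le.1 hl).1]
    · linarith [(abs_le.1 hr).1]

end ODE

/-! ### Integrals against functions of bounded variation -/
section BoundedVariation

theorem norm_sum_smul_sub_le {E : Type*} [NormedAddCommGroup E] [NormedSpace ℝ E]
    {f : ℕ → ℝ} {G : ℕ → E} {M : ℝ} {n : ℕ} (hG0 : G 0 = 0) (hG : ∀ i ≤ n, ‖G i‖ ≤ M) :
    ‖∑ i ∈ Finset.range n, f i • (G (i + 1) - G i)‖ ≤
      M * (|f n| + ∑ i ∈ Finset.range n, |f (i + 1) - f i|) := by
  have habel : ∀ n, ∑ i ∈ Finset.range n, f i • (G (i + 1) - G i) =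
      f n • G n - ∑ i ∈ Finset.range n, (f (i + 1) - f i) • G (i + 1) := fun n => by
    induction n with
    | zero => simp [hG0]
    | succ n ih =>
      rw [Finset.sum_range_succ, Finset.sum_range_succ, ih]
      module
  rw [habel, mul_add, Finset.mul_sum]
  refine (norm_sub_le _ _).trans (add_le_add ?_ ((norm_sum_le _ _).trans ?_))
  · rw [norm_smul, mul_comm, Real.norm_eq_abs]
    exact mul_le_mul_of_nonneg_right (hG n le_rfl) (abs_nonneg _)
  · refine Finset.sum_le_sum fun i hi => ?_
    rw [norm_smul, mul_comm, Real.norm_eq_abs]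
    exact mul_le_mul_of_nonneg_right (hG _ (Finset.mem_range.1 hi)) (abs_nonneg _)

theorem exists_monotone_partition_dist_lt {E : Type*} [PseudoMetricSpace E] {a b ε : ℝ}
    (hab : a ≤ b) (hε : 0 < ε) {F : ℝ → E} (hF : ContinuousOn F (Icc a b)) :
    ∃ (u : ℕ → ℝ) (n : ℕ), Monotone u ∧ (∀ i, u i ∈ Icc a b) ∧ u 0 = a ∧ u n = b ∧
      ∀ i, ∀ t ∈ Icc (u i) (u (i + 1)), dist (F t) (F (u i)) < ε := by
  obtain ⟨u, hu0, hmono, ⟨n, hn⟩, hcover⟩ := exists_monotone_Icc_subset_open_cover_Icc hab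
    (c := fun z : Icc a b => {x : Icc a b | dist (F x) (F z) < ε / 2})
    (fun z => isOpen_lt (hF.domRestrict.dist continuous_const) continuous_const)
    (fun z _ => mem_iUnion.2 ⟨z, by simpa using hε⟩)
  refine ⟨fun i => u i, n, fun i j hij => hmono hij, fun i => (u i).2, hu0, hn n le_rfl,
    fun i t ht => ?_⟩
  obtain ⟨z, hz⟩ := hcover i
  have ht' : dist (F t) (F z) < ε / 2 :=
    hz (show (⟨t, (u i).2.1.trans ht.1, ht.2.trans (u (i + 1)).2.2⟩ : Icc a b) ∈ _ from ht)
  have hu' : dist (F (u i)) (F z) < ε / 2 := hz (left_mem_Icc.2 (hmono i.le_succ))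
  linarith [dist_triangle_right (F t) (F (u i)) (F z)]

theorem abs_integral_mul_sub_riemannSum_le {ε : ℝ} {Y F : ℝ → ℝ} (hY : Continuous Y)
    (hF : Continuous F) {u : ℕ → ℝ} (hu : Monotone u)
    (hosc : ∀ i, ∀ t ∈ Icc (u i) (u (i + 1)), dist (F t) (F (u i)) < ε) (n : ℕ) :
    |(∫ t in u 0..u n, Y t * F t) -
        ∑ i ∈ Finset.range n, F (u i) * ∫ t in u i..u (i + 1), Y t| ≤
      ε * ∫ t in u 0..u n, |Y t| := by
  have hYF : Continuous fun t => Y t * F t := hY.mul hF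
  rw [← intervalIntegral.sum_integral_adjacent_intervals
      (fun k _ => hYF.intervalIntegrable _ _),
    ← intervalIntegral.sum_integral_adjacent_intervals
      (fun k _ => hY.abs.intervalIntegrable _ _), ← Finset.sum_sub_distrib, Finset.mul_sum]
  refine (Finset.abs_sum_le_sum_abs _ _).trans (Finset.sum_le_sum fun i _ => ?_)
  rw [← intervalIntegral.integral_const_mul, ← intervalIntegral.integral_const_mul,
    ← intervalIntegral.integral_sub (hYF.intervalIntegrable _ _)
      ((hY.const_mul _).intervalIntegrable _ _)]
  rw [← Real.norm_eq_abs]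
  refine intervalIntegral.norm_integral_le_of_norm_le (hu i.le_succ)
    (ae_of_all _ fun t ht => ?_) ((hY.abs.const_mul ε).intervalIntegrable _ _)
  rw [show Y t * F t - F (u i) * Y t = (F t - F (u i)) * Y t by ring, norm_mul]
  exact mul_le_mul_of_nonneg_right (hosc i t (Ioc_subset_Icc_self ht)).le (abs_nonneg _)

theorem sum_abs_sub_le_eVariationOn {f : ℝ → ℝ} {s : Set ℝ} (hf : BoundedVariationOn f s)
    {u : ℕ → ℝ} (hu : Monotone u) (hus : ∀ i, u i ∈ s) (n : ℕ) :
    ∑ i ∈ Finset.range n, |f (u (i + 1)) - f (u i)| ≤ (eVariationOn f s).toReal := by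
  refine le_trans (le_of_eq ?_)
    (ENNReal.toReal_mono hf (eVariationOn.sum_le (n := n) hu hus))
  rw [ENNReal.toReal_sum fun i _ => edist_ne_top _ _]
  simp only [edist_dist, Real.dist_eq, ENNReal.toReal_ofReal (abs_nonneg _)]

theorem abs_integral_mul_le_of_boundedVariationOn {a b M : ℝ} (hab : a ≤ b) {Y F : ℝ → ℝ}
    (hY : Continuous Y) (hF : Continuous F) (hbv : BoundedVariationOn F (Icc a b))
    (hM : ∀ x ∈ Icc a b, |∫ t in a..x, Y t| ≤ M) :
    |∫ t in a..b, Y t * F t| ≤ M * (|F b| + (eVariationOn F (Icc a b)).toReal) := by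
  have hM0 : 0 ≤ M := (abs_nonneg _).trans (hM a (left_mem_Icc.2 hab))
  have hYint : 0 ≤ ∫ t in a..b, |Y t| :=
    intervalIntegral.integral_nonneg hab fun _ _ => abs_nonneg _
  refine le_of_forall_pos_le_add fun ε hε => ?_
  obtain ⟨u, n, hmono, hmem, hu0, hun, hosc⟩ := exists_monotone_partition_dist_lt hab
    (div_pos hε (by linarith : 0 < (∫ t in a..b, |Y t|) + 1)) hF.continuousOn
  have hriemann := abs_integral_mul_sub_riemannSum_le hY hF hmono hosc n
  have habel := norm_sum_smul_sub_le (f := fun i => F (u i)) (G := fun i => ∫ t in a..u i, Y t)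
    (M := M) (n := n) (by simp [hu0]) fun i _ => hM _ (hmem i)
  simp only [intervalIntegral.integral_interval_sub_left (hY.intervalIntegrable _ _)
    (hY.intervalIntegrable _ _), smul_eq_mul, Real.norm_eq_abs] at habel
  rw [hu0, hun] at hriemann
  rw [hun] at habel
  have hvar := mul_le_mul_of_nonneg_left (sum_abs_sub_le_eVariationOn hbv hmono hmem n) hM0
  have herr : ε / ((∫ t in a..b, |Y t|) + 1) * (∫ t in a..b, |Y t|) ≤ ε := by
    rw [div_mul_eq_mul_div, div_le_iff₀ (by linarith)]
    nlinarith
  have := abs_sub_abs_le_abs_sub (∫ t in a..b, Y t * F t)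
    (∑ i ∈ Finset.range n, F (u i) * ∫ t in u i..u (i + 1), Y t)
  linarith

end BoundedVariation

/-! ### Convolution with a decaying exponential -/
section ExpConv

/-- The solution of `y' = -κ y + g` with `y c = 0`; it supplies the two halves of the Green's
function of `-D² + κ²`, the right half being obtained by reflection. -/
noncomputable def expConv (κ c : ℝ) (g : ℝ → ℝ) (x : ℝ) : ℝ :=
  ∫ t in c..x, Real.exp (-κ * (x - t)) * g t

variable {κ c x : ℝ} {g : ℝ → ℝ}

theorem continuous_exp_mul (κ x : ℝ) (hg : Continuous g) :
    Continuous fun t => Real.exp (-κ * (x - t)) * g t := by fun_prop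

theorem hasDerivAt_expConv (κ c x : ℝ) (hg : Continuous g) :
    HasDerivAt (expConv κ c g) (-κ * expConv κ c g x + g x) x := by
  have hfactor : expConv κ c g =
      fun x => Real.exp (-κ * x) * ∫ t in c..x, Real.exp (κ * t) * g t := by
    funext x
    rw [expConv, ← intervalIntegral.integral_const_mul]
    congr 1
    funext t
    rw [← mul_assoc, ← Real.exp_add]
    ring_nf
  have hcont : Continuous fun t => Real.exp (κ * t) * g t := by fun_prop
  have hexp : HasDerivAt (fun x : ℝ => Real.exp (-κ * x)) (Real.exp (-κ * x) * (-κ * 1)) x :=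
    ((hasDerivAt_id x).const_mul _).exp
  have hint := intervalIntegral.integral_hasDerivAt_right (hcont.intervalIntegrable c x)
    (hcont.stronglyMeasurableAtFilter _ _) hcont.continuousAt
  have hone : Real.exp (-κ * x) * Real.exp (κ * x) = 1 := by
    rw [← Real.exp_add]
    simp
  rw [hfactor]
  refine (hexp.mul hint).congr_deriv ?_
  linear_combination g x * hone

theorem expConv_self (κ c : ℝ) (g : ℝ → ℝ) : expConv κ c g c = 0 :=
  intervalIntegral.integral_same

theorem expConv_add (κ c x : ℝ) {h : ℝ → ℝ} (hg : Continuous g) (hh : Continuous h) :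
    expConv κ c (fun t => g t + h t) x = expConv κ c g x + expConv κ c h x := by
  simp only [expConv, mul_add]
  exact intervalIntegral.integral_add ((continuous_exp_mul κ x hg).intervalIntegrable _ _)
    ((continuous_exp_mul κ x hh).intervalIntegrable _ _)

theorem expConv_const_mul (κ c r : ℝ) (g : ℝ → ℝ) (x : ℝ) :
    expConv κ c (fun t => r * g t) x = r * expConv κ c g x := by
  simp only [expConv, mul_left_comm _ r, intervalIntegral.integral_const_mul]

theorem exp_neg_mul_sub_le_one (hκ : 0 ≤ κ) {t : ℝ} (htx : t ≤ x) :
    Real.exp (-κ * (x - t)) ≤ 1 :=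
  Real.exp_le_one_iff.2 (by nlinarith)

theorem abs_expConv_le_integral {d : ℝ} (hκ : 0 ≤ κ) (hg : Continuous g) (hx : x ∈ Icc c d) :
    |expConv κ c g x| ≤ ∫ t in c..d, |g t| := by
  calc |expConv κ c g x| ≤ ∫ t in c..x, |g t| := by
        rw [← Real.norm_eq_abs]
        refine intervalIntegral.norm_integral_le_of_norm_le hx.1 (ae_of_all _ fun t ht => ?_)
          (hg.abs.intervalIntegrable _ _)
        rw [norm_mul, Real.norm_eq_abs, Real.abs_exp]
        exact mul_le_of_le_one_left (abs_nonneg _) (exp_neg_mul_sub_le_one hκ ht.2)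
    _ ≤ ∫ t in c..d, |g t| :=
        intervalIntegral.integral_mono_interval (μ := volume) le_rfl hx.1 hx.2
          (ae_of_all _ fun t => abs_nonneg _)
          (hg.abs.intervalIntegrable _ _)

theorem integral_exp_neg_mul_sub (hκ : κ ≠ 0) (c x : ℝ) :
    ∫ t in c..x, Real.exp (-κ * (x - t)) = (1 - Real.exp (-κ * (x - c))) / κ := by
  have hd : ∀ t, HasDerivAt (fun t => Real.exp (-κ * (x - t)) / κ) (Real.exp (-κ * (x - t))) t :=
    fun t => (((((hasDerivAt_id t).const_sub x).const_mul (-κ)).exp).div_const κ).congr_deriv (by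
      simp [hκ])
  rw [intervalIntegral.integral_eq_sub_of_hasDerivAt (fun t _ => hd t)
    (Continuous.intervalIntegrable (by fun_prop) _ _), sub_self, mul_zero, Real.exp_zero, sub_div]

theorem abs_expConv_le_div {M : ℝ} (hκ : 0 < κ) (hg : ∀ t, |g t| ≤ M) (hx : c ≤ x) :
    |expConv κ c g x| ≤ M / κ := by
  have hM : 0 ≤ M := (abs_nonneg _).trans (hg c)
  have hcont : Continuous fun t => Real.exp (-κ * (x - t)) * M := by fun_prop
  calc |expConv κ c g x| ≤ ∫ t in c..x, Real.exp (-κ * (x - t)) * M := by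
        rw [← Real.norm_eq_abs]
        refine intervalIntegral.norm_integral_le_of_norm_le hx (ae_of_all _ fun t _ => ?_)
          (hcont.intervalIntegrable _ _)
        rw [norm_mul, Real.norm_eq_abs, Real.abs_exp]
        exact mul_le_mul_of_nonneg_left (hg t) (Real.exp_pos _).le
    _ = (1 - Real.exp (-κ * (x - c))) * M / κ := by
        rw [intervalIntegral.integral_mul_const, integral_exp_neg_mul_sub hκ.ne']
        ring
    _ ≤ M / κ := by
        gcongr
        exact mul_le_of_le_one_left hM (by linarith [Real.exp_pos (-κ * (x - c))])

end ExpConv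

/-! ### Continuous functions on a compact interval -/
section FunctionSpace

variable {a b : ℝ}

/-- Lebesgue measure on `[a, b]`. -/
noncomputable def intervalMeasure (a b : ℝ) : Measure (Icc a b) :=
  volume.comap Subtype.val

instance : IsFiniteMeasure (intervalMeasure a b) :=
  ⟨by
    rw [intervalMeasure, comap_subtype_coe_apply measurableSet_Icc, image_univ, Subtype.range_coe]
    exact measure_Icc_lt_top⟩

/-- The inclusion of the continuous functions into `L²`; it makes the pairing
`∫ x in a..b, g x * h x` an inner product to which Hilbert space theory applies. -/
noncomputable def toL2 : C(Icc a b, ℝ) →L[ℝ] Lp ℝ 2 (intervalMeasure a b) :=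
  ContinuousMap.toLp 2 (intervalMeasure a b) ℝ

theorem denseRange_toL2 : DenseRange (toL2 : C(Icc a b, ℝ) →L[ℝ] _) :=
  ContinuousMap.toLp_denseRange ℝ _ ℝ (by simp)

/-- The restriction to `[a, b]` of a function continuous there. -/
def restrictIcc {y : ℝ → ℝ} (hy : ContinuousOn y (Icc a b)) : C(Icc a b, ℝ) :=
  ⟨(Icc a b).domRestrict y, hy.domRestrict⟩

variable [hab : Fact (a < b)]

/-- The extension of a continuous function on `[a, b]` to the line which is constant outside
`[a, b]`; derivatives and interval integrals are those of this extension. -/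
noncomputable def extend (g : C(Icc a b, ℝ)) : ℝ → ℝ :=
  IccExtend hab.out.le g

theorem continuous_extend (g : C(Icc a b, ℝ)) : Continuous (extend g) :=
  g.continuous.Icc_extend'

theorem extend_of_mem (g : C(Icc a b, ℝ)) {x : ℝ} (hx : x ∈ Icc a b) : extend g x = g ⟨x, hx⟩ :=
  IccExtend_of_mem _ _ hx

theorem extend_coe (g : C(Icc a b, ℝ)) (x : Icc a b) : extend g x = g x :=
  IccExtend_val _ _ x

theorem extend_restrictIcc {y : ℝ → ℝ} (hy : ContinuousOn y (Icc a b)) :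
    EqOn (extend (restrictIcc hy)) y (Icc a b) := fun _ hx =>
  extend_of_mem _ hx

theorem extend_add (g h : C(Icc a b, ℝ)) (x : ℝ) : extend (g + h) x = extend g x + extend h x :=
  rfl

theorem extend_sub (g h : C(Icc a b, ℝ)) (x : ℝ) : extend (g - h) x = extend g x - extend h x :=
  rfl

theorem extend_mul (g h : C(Icc a b, ℝ)) (x : ℝ) : extend (g * h) x = extend g x * extend h x :=
  rfl

theorem extend_smul (c : ℝ) (g : C(Icc a b, ℝ)) (x : ℝ) : extend (c • g) x = c * extend g x :=
  rfl

theorem abs_extend_le_norm (g : C(Icc a b, ℝ)) (x : ℝ) : |extend g x| ≤ ‖g‖ :=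
  g.norm_coe_le_norm (projIcc a b hab.out.le x)

theorem norm_le_of_abs_extend_le {g : C(Icc a b, ℝ)} {M : ℝ}
    (h : ∀ x ∈ Icc a b, |extend g x| ≤ M) : ‖g‖ ≤ M := by
  have : Nonempty (Icc a b) := ⟨⟨a, left_mem_Icc.2 hab.out.le⟩⟩
  exact (ContinuousMap.norm_le_of_nonempty g).2 fun x => extend_coe g x ▸ h x x.2

theorem inner_toL2 (g h : C(Icc a b, ℝ)) :
    ⟪toL2 g, toL2 h⟫_ℝ = ∫ x in a..b, extend g x * extend h x := by
  rw [toL2, ContinuousMap.inner_toLp, intervalIntegral.integral_of_le hab.out.le,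
    ← integral_Icc_eq_integral_Ioc, ← integral_subtype_comap measurableSet_Icc, intervalMeasure]
  simp only [extend_coe, RCLike.conj_to_real, mul_comm]

theorem norm_toL2_sq (g : C(Icc a b, ℝ)) : ‖toL2 g‖ ^ 2 = ∫ x in a..b, extend g x ^ 2 := by
  rw [← real_inner_self_eq_norm_sq, inner_toL2]
  simp only [sq]

theorem toL2_injective : Function.Injective (toL2 : C(Icc a b, ℝ) →L[ℝ] _) := by
  refine (injective_iff_map_eq_zero _).2 fun g hg => ?_
  by_contra hne
  obtain ⟨x, hx⟩ := DFunLike.ne_iff.1 hne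
  have hpos : 0 < ∫ x in a..b, extend g x ^ 2 :=
    intervalIntegral.integral_pos hab.out ((continuous_extend g).pow 2).continuousOn
      (fun _ _ => sq_nonneg _) ⟨x, x.2, by rw [extend_coe]; exact sq_pos_of_ne_zero hx⟩
  rw [← norm_toL2_sq, hg, norm_zero] at hpos
  norm_num at hpos

theorem integral_abs_extend_le (g : C(Icc a b, ℝ)) :
    ∫ x in a..b, |extend g x| ≤ ‖toL2 (1 : C(Icc a b, ℝ))‖ * ‖toL2 g‖ := by
  have habs : ‖toL2 |g|‖ = ‖toL2 g‖ := by
    rw [← sq_eq_sq₀ (norm_nonneg _) (norm_nonneg _), norm_toL2_sq, norm_toL2_sq]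
    exact intervalIntegral.integral_congr fun x _ => sq_abs (extend g x)
  calc ∫ x in a..b, |extend g x| = ⟪toL2 1, toL2 |g|⟫_ℝ := by
        rw [inner_toL2]
        exact intervalIntegral.integral_congr fun x _ => (one_mul |extend g x|).symm
    _ ≤ ‖toL2 (1 : C(Icc a b, ℝ))‖ * ‖toL2 g‖ := habs ▸ real_inner_le_norm _ _

end FunctionSpace

/-! ### The Sturm–Liouville operator -/
section Operator

/-- The graph of `u ↦ u''` on the functions satisfying the boundary conditions of angles `α` at `a`
and `β` at `b`. -/
def HasSecondDeriv {a b : ℝ} [Fact (a < b)] (α β : ℝ) (u w : C(Icc a b, ℝ)) : Prop :=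
  ∃ u' : ℝ → ℝ,
    (∀ x ∈ Icc a b, HasDerivWithinAt (extend u) (u' x) (Icc a b) x) ∧
    (∀ x ∈ Icc a b, HasDerivWithinAt u' (extend w x) (Icc a b) x) ∧
    extend u a * Real.cos α + u' a * Real.sin α = 0 ∧
    extend u b * Real.cos β + u' b * Real.sin β = 0

variable {a b : ℝ} [hab : Fact (a < b)] {α β : ℝ} {u v w z : C(Icc a b, ℝ)}

theorem HasSecondDeriv.add (hu : HasSecondDeriv α β u w) (hv : HasSecondDeriv α β v z) :
    HasSecondDeriv α β (u + v) (w + z) := by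
  obtain ⟨u', hu, hu', hua, hub⟩ := hu
  obtain ⟨v', hv, hv', hva, hvb⟩ := hv
  refine ⟨u' + v', fun x hx => (hu x hx).add (hv x hx), fun x hx => (hu' x hx).add (hv' x hx),
    ?_, ?_⟩
  · rw [extend_add, Pi.add_apply]
    linear_combination hua + hva
  · rw [extend_add, Pi.add_apply]
    linear_combination hub + hvb

theorem HasSecondDeriv.const_smul (c : ℝ) (hu : HasSecondDeriv α β u w) :
    HasSecondDeriv α β (c • u) (c • w) := by
  obtain ⟨u', hu, hu', hua, hub⟩ := hu
  refine ⟨c • u', fun x hx => (hu x hx).const_smul c, fun x hx => (hu' x hx).const_smul c, ?_, ?_⟩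
  · rw [extend_smul, Pi.smul_apply, smul_eq_mul]
    linear_combination c * hua
  · rw [extend_smul, Pi.smul_apply, smul_eq_mul]
    linear_combination c * hub

theorem HasSecondDeriv.sub (hu : HasSecondDeriv α β u w) (hv : HasSecondDeriv α β v z) :
    HasSecondDeriv α β (u - v) (w - z) := by
  simpa only [neg_one_smul, ← sub_eq_add_neg] using hu.add (hv.const_smul (-1))

theorem mul_eq_mul_of_boundary_condition {u u' v v' : ℝ}
    (hu : u * Real.cos α + u' * Real.sin α = 0) (hv : v * Real.cos α + v' * Real.sin α = 0) :
    u * v' = u' * v := by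
  linear_combination (Real.cos α * v' - Real.sin α * v) * hu
    - (Real.cos α * u' - Real.sin α * u) * hv - (u * v' - u' * v) * Real.sin_sq_add_cos_sq α

theorem HasSecondDeriv.inner_toL2_comm (hu : HasSecondDeriv α β u w)
    (hv : HasSecondDeriv α β v z) : ⟪toL2 w, toL2 v⟫_ℝ = ⟪toL2 u, toL2 z⟫_ℝ := by
  obtain ⟨u', hu, hu', hua, hub⟩ := hu
  obtain ⟨v', hv, hv', hva, hvb⟩ := hv
  have hcont : ∀ g h : C(Icc a b, ℝ), Continuous fun x => extend g x * extend h x := fun g h =>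
    (continuous_extend g).mul (continuous_extend h)
  have hwronskian := integral_eq_sub_of_hasDerivWithinAt
    (F := fun x => extend u x * v' x - u' x * extend v x)
    (F' := fun x => extend u x * extend z x - extend w x * extend v x) hab.out.le
    (fun x hx => (((hu x hx).mul (hv' x hx)).sub ((hu' x hx).mul (hv x hx))).congr_deriv
      (by ring)) ((hcont u z).sub (hcont w v)).continuousOn
  rw [intervalIntegral.integral_sub ((hcont u z).intervalIntegrable _ _)
    ((hcont w v).intervalIntegrable _ _), ← inner_toL2, ← inner_toL2] at hwronskian
  linarith [mul_eq_mul_of_boundary_condition hua hva, mul_eq_mul_of_boundary_condition hub hvb]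

variable {q : C(Icc a b, ℝ)} {lam : ℝ}

/-- The eigenvalue equation `-u'' + q u = lam u` with the boundary conditions; `u = 0` is
allowed. -/
def IsEigensolution (q : C(Icc a b, ℝ)) (α β lam : ℝ) (u : C(Icc a b, ℝ)) : Prop :=
  HasSecondDeriv α β u (q * u - lam • u)

theorem eq_zero_of_initial_values_eq_zero {v : C(Icc a b, ℝ)} {v' : ℝ → ℝ}
    (hv : ∀ x ∈ Icc a b, HasDerivWithinAt (extend v) (v' x) (Icc a b) x)
    (hv' : ∀ x ∈ Icc a b, HasDerivWithinAt v' (extend (q * v - lam • v) x) (Icc a b) x)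
    (hva : extend v a = 0) (hva' : v' a = 0) : v = 0 := by
  have hzero := eqOn_zero_of_second_order_ivp (K := ‖q‖ + |lam|) hv hv' (fun x _ => by
    rw [extend_sub, extend_mul, extend_smul, ← sub_mul, norm_mul]
    exact mul_le_mul_of_nonneg_right ((norm_sub_le _ _).trans
      (add_le_add (abs_extend_le_norm q x) le_rfl)) (norm_nonneg _)) hva hva'
  ext x
  rw [← extend_coe, hzero x.2]
  rfl

theorem exists_eq_smul_of_isEigensolution (hu : IsEigensolution q α β lam u)
    (hv : IsEigensolution q α β lam v) (hv0 : v ≠ 0) : ∃ c : ℝ, u = c • v := by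
  obtain ⟨u', hu, hu', hua, -⟩ := hu
  obtain ⟨v', hv, hv', hva, -⟩ := hv
  have hdata : extend v a ^ 2 + v' a ^ 2 ≠ 0 := fun h => by
    have : extend v a = 0 := by nlinarith
    have : v' a = 0 := by nlinarith
    exact hv0 (eq_zero_of_initial_values_eq_zero hv hv' ‹_› ‹_›)
  set r := extend v a ^ 2 + v' a ^ 2
  set s := extend u a * extend v a + u' a * v' a
  have hW := mul_eq_mul_of_boundary_condition hua hva
  have hcomb : r • u - s • v = 0 := by
    refine eq_zero_of_initial_values_eq_zero (q := q) (lam := lam)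
      (v' := fun x => r * u' x - s * v' x)
      (fun x hx => ((hu x hx).const_mul r).sub ((hv x hx).const_mul s))
      (fun x hx => (((hu' x hx).const_mul r).sub ((hv' x hx).const_mul s)).congr_deriv ?_) ?_ ?_
    · simp only [extend_sub, extend_mul, extend_smul]
      ring
    · rw [extend_sub, extend_smul, extend_smul]
      linear_combination v' a * hW
    · linear_combination (-extend v a) * hW
  refine ⟨s / r, ?_⟩
  rw [div_eq_inv_mul, mul_smul, ← sub_eq_zero.1 hcomb, inv_smul_smul₀ hdata]

theorem isSLEigenpair_of_isEigensolution {p : ℝ → ℝ} (hp : EqOn (extend q) p (Icc a b))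
    (hu0 : u ≠ 0) (hu : IsEigensolution q α β lam u) :
    IsSLEigenpair a b p α β lam (extend u) := by
  obtain ⟨u', hu, hu', hua, hub⟩ := hu
  obtain ⟨x, hx⟩ := DFunLike.ne_iff.1 hu0
  refine ⟨u', _, hu, hu', (continuous_extend _).continuousOn,
    ⟨x, x.2, by rwa [extend_coe]⟩, fun x hx => ?_, hua, hub⟩
  rw [extend_sub, extend_mul, extend_smul, hp hx]
  ring

theorem exists_isEigensolution_of_isSLEigenpair {p y : ℝ → ℝ} (hp : EqOn (extend q) p (Icc a b))
    (hy : IsSLEigenpair a b p α β lam y) :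
    ∃ u : C(Icc a b, ℝ), EqOn (extend u) y (Icc a b) ∧ IsEigensolution q α β lam u := by
  obtain ⟨y', y'', hy, hy', -, -, heq, hya, hyb⟩ := hy
  have hcont : ContinuousOn y (Icc a b) := fun x hx => (hy x hx).continuousWithinAt
  have hu := extend_restrictIcc (hab := hab) hcont
  refine ⟨restrictIcc hcont, hu, y', fun x hx => (hy x hx).congr_of_mem hu hx,
    fun x hx => (hy' x hx).congr_deriv ?_, ?_, ?_⟩
  · rw [extend_sub, extend_mul, extend_smul, hp hx, hu hx]
    linarith [heq x hx]
  · rwa [hu (left_mem_Icc.2 hab.out.le)]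
  · rwa [hu (right_mem_Icc.2 hab.out.le)]

end Operator

/-! ### The resolvent of `-D²` -/
section FreeResolvent

/-- At a boundary condition of angle `α`, the modes `ζ = κ u - u'` and `w = κ u + u'` are related by
`ζ = reflectionCoeff α κ * w`. -/
noncomputable def reflectionCoeff (α κ : ℝ) : ℝ :=
  (κ * Real.sin α + Real.cos α) / (κ * Real.sin α - Real.cos α)

theorem boundary_condition_of_eq_reflectionCoeff_mul {α κ ζ w : ℝ} (hκ : κ ≠ 0)
    (hα : κ * Real.sin α - Real.cos α ≠ 0) (h : ζ = reflectionCoeff α κ * w) :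
    (w + ζ) / (2 * κ) * Real.cos α + (w - ζ) / 2 * Real.sin α = 0 := by
  rw [h, reflectionCoeff]
  field_simp
  ring

theorem eventually_abs_reflectionCoeff_le_two (α : ℝ) :
    ∀ᶠ κ in atTop, κ * Real.sin α - Real.cos α ≠ 0 ∧ |reflectionCoeff α κ| ≤ 2 := by
  rcases eq_or_ne (Real.sin α) 0 with hsin | hsin
  · have hcos : Real.cos α ≠ 0 := fun h => by
      have := Real.sin_sq_add_cos_sq α
      norm_num [h, hsin] at this
    refine Eventually.of_forall fun κ => ?_
    simp [reflectionCoeff, hsin, hcos]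
  · filter_upwards [eventually_ge_atTop (3 / |Real.sin α|)] with κ hκ
    have hpos : 0 < |Real.sin α| := abs_pos.2 hsin
    have hlarge : 3 ≤ |κ * Real.sin α| := by
      rw [abs_mul]
      exact ((div_le_iff₀ hpos).1 hκ).trans (mul_le_mul_of_nonneg_right (le_abs_self κ) hpos.le)
    have hcos := Real.abs_cos_le_one α
    have hden : 2 ≤ |κ * Real.sin α - Real.cos α| := by
      linarith [abs_sub_abs_le_abs_sub (κ * Real.sin α) (Real.cos α)]
    refine ⟨abs_pos.1 (by linarith), ?_⟩
    rw [reflectionCoeff, abs_div, div_le_iff₀ (by linarith)]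
    linarith [abs_add_le (κ * Real.sin α) (Real.cos α),
      abs_sub_abs_le_abs_sub (κ * Real.sin α) (Real.cos α)]

/-- The first component of the solution `(A, B)` of `A = ρ (e B + p)`, `B = σ (e A + r)`; the second
one is obtained by exchanging the roles of the two ends of the interval. -/
noncomputable def amplitude (ρ σ e p r : ℝ) : ℝ :=
  ρ * (p + σ * e * r) / (1 - ρ * σ * e ^ 2)

section amplitude

variable {ρ σ e p r : ℝ}

theorem three_quarters_le_one_sub_mul (hρ : |ρ| ≤ 2) (hσ : |σ| ≤ 2) (he : |e| ≤ 1 / 4) :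
    3 / 4 ≤ 1 - ρ * σ * e ^ 2 := by
  have : |ρ * σ * e ^ 2| ≤ 2 * 2 * (1 / 4) ^ 2 := by
    rw [abs_mul, abs_mul, abs_pow]
    gcongr
  linarith [le_abs_self (ρ * σ * e ^ 2)]

theorem amplitude_eq (h : 1 - ρ * σ * e ^ 2 ≠ 0) :
    amplitude ρ σ e p r = ρ * (amplitude σ ρ e r p * e + p) := by
  have h' : 1 - σ * ρ * e ^ 2 ≠ 0 := by rwa [mul_comm σ]
  rw [amplitude, amplitude, mul_comm σ ρ] at *
  field_simp
  ring

theorem abs_amplitude_le {m : ℝ} (hρ : |ρ| ≤ 2) (hσ : |σ| ≤ 2) (he : |e| ≤ 1 / 4) (hp : |p| ≤ m)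
    (hr : |r| ≤ m) : |amplitude ρ σ e p r| ≤ 4 * m := by
  have hden := three_quarters_le_one_sub_mul hρ hσ he
  have hnum : |ρ * (p + σ * e * r)| ≤ 2 * (m + 2 * (1 / 4) * m) := by
    rw [abs_mul]
    gcongr
    refine (abs_add_le _ _).trans (add_le_add hp ?_)
    rw [abs_mul, abs_mul]
    gcongr
  rw [amplitude, abs_div, abs_of_pos (by linarith : 0 < 1 - ρ * σ * e ^ 2),
    div_le_iff₀ (by linarith)]
  nlinarith [abs_nonneg p]

theorem amplitude_add (ρ σ e p r p' r' : ℝ) :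
    amplitude ρ σ e (p + p') (r + r') = amplitude ρ σ e p r + amplitude ρ σ e p' r' := by
  simp only [amplitude]
  ring

theorem amplitude_const_mul (ρ σ e p r c : ℝ) :
    amplitude ρ σ e (c * p) (c * r) = c * amplitude ρ σ e p r := by
  simp only [amplitude]
  ring

end amplitude

/-- The convolution `∫_x^b e^{-κ (t - x)} g t` with the reflected exponential. -/
noncomputable def expConvLeft (κ b : ℝ) (g : ℝ → ℝ) (x : ℝ) : ℝ :=
  expConv κ (-b) (fun t => g (-t)) (-x)

variable {κ a b x : ℝ} {g : ℝ → ℝ}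

theorem hasDerivAt_expConvLeft (κ b x : ℝ) (hg : Continuous g) :
    HasDerivAt (expConvLeft κ b g) (κ * expConvLeft κ b g x - g x) x := by
  refine ((hasDerivAt_expConv κ (-b) (-x) (hg.comp continuous_neg)).comp x
    (hasDerivAt_neg x)).congr_deriv ?_
  simp only [expConvLeft, Function.comp_def, neg_neg]
  ring

theorem expConvLeft_self (κ b : ℝ) (g : ℝ → ℝ) : expConvLeft κ b g b = 0 :=
  expConv_self _ _ _

theorem expConvLeft_add (κ b x : ℝ) {h : ℝ → ℝ} (hg : Continuous g) (hh : Continuous h) :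
    expConvLeft κ b (fun t => g t + h t) x = expConvLeft κ b g x + expConvLeft κ b h x :=
  expConv_add _ _ _ (hg.comp continuous_neg) (hh.comp continuous_neg)

theorem expConvLeft_const_mul (κ b r : ℝ) (g : ℝ → ℝ) (x : ℝ) :
    expConvLeft κ b (fun t => r * g t) x = r * expConvLeft κ b g x :=
  expConv_const_mul _ _ _ _ _

theorem abs_expConvLeft_le_integral (hκ : 0 ≤ κ) (hg : Continuous g) (hx : x ∈ Icc a b) :
    |expConvLeft κ b g x| ≤ ∫ t in a..b, |g t| := by
  have hreflect := intervalIntegral.integral_comp_neg (a := -b) (b := -a) fun t => |g t|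
  rw [neg_neg, neg_neg] at hreflect
  rw [← hreflect]
  exact abs_expConv_le_integral hκ (hg.comp continuous_neg) ⟨neg_le_neg hx.2, neg_le_neg hx.1⟩

theorem abs_expConvLeft_le_div {M : ℝ} (hκ : 0 < κ) (hg : ∀ t, |g t| ≤ M) (hx : x ≤ b) :
    |expConvLeft κ b g x| ≤ M / κ :=
  abs_expConv_le_div hκ (fun t => hg (-t)) (neg_le_neg hx)

/-- The mode `κ u - u'` of the solution `u` of `-u'' + κ² u = g` with the boundary conditions. -/
noncomputable def modeRight (α β κ a b : ℝ) (g : ℝ → ℝ) (x : ℝ) : ℝ :=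
  amplitude (reflectionCoeff α κ) (reflectionCoeff (-β) κ) (Real.exp (-κ * (b - a)))
    (expConvLeft κ b g a) (expConv κ a g b) * Real.exp (-κ * (x - a)) + expConv κ a g x

/-- The mode `κ u + u'` of the solution `u` of `-u'' + κ² u = g` with the boundary conditions. -/
noncomputable def modeLeft (α β κ a b : ℝ) (g : ℝ → ℝ) (x : ℝ) : ℝ :=
  amplitude (reflectionCoeff (-β) κ) (reflectionCoeff α κ) (Real.exp (-κ * (b - a)))
    (expConv κ a g b) (expConvLeft κ b g a) * Real.exp (-κ * (b - x)) + expConvLeft κ b g x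

variable {α β : ℝ}

theorem hasDerivAt_modeRight (hg : Continuous g) (x : ℝ) :
    HasDerivAt (modeRight α β κ a b g) (-κ * modeRight α β κ a b g x + g x) x := by
  have hexp : HasDerivAt (fun x => Real.exp (-κ * (x - a))) (-κ * Real.exp (-κ * (x - a))) x := by
    simpa [mul_comm] using (((hasDerivAt_id x).sub_const a).const_mul (-κ)).exp
  refine ((hexp.const_mul _).add (hasDerivAt_expConv κ a x hg)).congr_deriv ?_
  rw [modeRight]
  ring

theorem hasDerivAt_modeLeft (hg : Continuous g) (x : ℝ) :
    HasDerivAt (modeLeft α β κ a b g) (κ * modeLeft α β κ a b g x - g x) x := by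
  have hexp : HasDerivAt (fun x => Real.exp (-κ * (b - x))) (κ * Real.exp (-κ * (b - x))) x := by
    simpa [mul_comm] using (((hasDerivAt_id x).const_sub b).const_mul (-κ)).exp
  refine ((hexp.const_mul _).add (hasDerivAt_expConvLeft κ b x hg)).congr_deriv ?_
  rw [modeLeft]
  ring

theorem modeRight_add {h : ℝ → ℝ} (hg : Continuous g) (hh : Continuous h) (x : ℝ) :
    modeRight α β κ a b (fun t => g t + h t) x =
      modeRight α β κ a b g x + modeRight α β κ a b h x := by
  simp only [modeRight, expConv_add κ a _ hg hh, expConvLeft_add κ b _ hg hh, amplitude_add]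
  ring

theorem modeLeft_add {h : ℝ → ℝ} (hg : Continuous g) (hh : Continuous h) (x : ℝ) :
    modeLeft α β κ a b (fun t => g t + h t) x =
      modeLeft α β κ a b g x + modeLeft α β κ a b h x := by
  simp only [modeLeft, expConv_add κ a _ hg hh, expConvLeft_add κ b _ hg hh, amplitude_add]
  ring

theorem modeRight_const_mul (r : ℝ) (g : ℝ → ℝ) (x : ℝ) :
    modeRight α β κ a b (fun t => r * g t) x = r * modeRight α β κ a b g x := by
  simp only [modeRight, expConv_const_mul, expConvLeft_const_mul, amplitude_const_mul]
  ring

theorem modeLeft_const_mul (r : ℝ) (g : ℝ → ℝ) (x : ℝ) :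
    modeLeft α β κ a b (fun t => r * g t) x = r * modeLeft α β κ a b g x := by
  simp only [modeLeft, expConv_const_mul, expConvLeft_const_mul, amplitude_const_mul]
  ring

/-- The bounds on the reflections at the two ends which hold for all large `κ` and under which the
boundary value problem for `-D² + κ²` is solved by amplitudes. -/
structure ReflectionBounds (α β κ a b : ℝ) : Prop where
  pos : 0 < κ
  left_ne_zero : κ * Real.sin α - Real.cos α ≠ 0
  left_le : |reflectionCoeff α κ| ≤ 2
  right_ne_zero : κ * Real.sin (-β) - Real.cos (-β) ≠ 0
  right_le : |reflectionCoeff (-β) κ| ≤ 2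
  exp_le : |Real.exp (-κ * (b - a))| ≤ 1 / 4

theorem eventually_reflectionBounds (α β : ℝ) (hab : a < b) :
    ∀ᶠ κ in atTop, ReflectionBounds α β κ a b := by
  have hexp : Tendsto (fun κ => |Real.exp (-κ * (b - a))|) atTop (𝓝 |0|) :=
    (Real.tendsto_exp_atBot.comp
      (tendsto_neg_atTop_atBot.atBot_mul_const (sub_pos.2 hab))).abs
  rw [abs_zero] at hexp
  filter_upwards [eventually_gt_atTop 0, eventually_abs_reflectionCoeff_le_two α,
    eventually_abs_reflectionCoeff_le_two (-β),
    hexp.eventually_le_const (by norm_num : (0 : ℝ) < 1 / 4)] with κ hκ hα hβ he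
  exact ⟨hκ, hα.1, hα.2, hβ.1, hβ.2, he⟩

namespace ReflectionBounds

variable (hr : ReflectionBounds α β κ a b)
include hr

theorem modeRight_left_endpoint (g : ℝ → ℝ) :
    modeRight α β κ a b g a = reflectionCoeff α κ * modeLeft α β κ a b g a := by
  have hden := three_quarters_le_one_sub_mul hr.left_le hr.right_le hr.exp_le
  rw [modeRight, expConv_self, sub_self, mul_zero, Real.exp_zero, mul_one, add_zero,
    amplitude_eq (by linarith), modeLeft]

theorem modeLeft_right_endpoint (g : ℝ → ℝ) :
    modeLeft α β κ a b g b = reflectionCoeff (-β) κ * modeRight α β κ a b g b := by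
  have hden := three_quarters_le_one_sub_mul hr.right_le hr.left_le hr.exp_le
  rw [modeLeft, expConvLeft_self, sub_self, mul_zero, Real.exp_zero, mul_one, add_zero,
    amplitude_eq (by linarith), modeRight]

variable {m : ℝ} (hF : ∀ x ∈ Icc a b, |expConv κ a g x| ≤ m)
  (hG : ∀ x ∈ Icc a b, |expConvLeft κ b g x| ≤ m)
include hF hG

theorem abs_modeRight_le (hx : x ∈ Icc a b) : |modeRight α β κ a b g x| ≤ 5 * m := by
  have hab : a ≤ b := hx.1.trans hx.2
  have hA := abs_amplitude_le hr.left_le hr.right_le hr.exp_le (hG a (left_mem_Icc.2 hab))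
    (hF b (right_mem_Icc.2 hab))
  have hexp := exp_neg_mul_sub_le_one hr.pos.le hx.1
  calc |modeRight α β κ a b g x| ≤ 4 * m * 1 + m := by
        refine (abs_add_le _ _).trans (add_le_add ?_ (hF x hx))
        rw [abs_mul, Real.abs_exp]
        exact mul_le_mul hA hexp (Real.exp_pos _).le ((abs_nonneg _).trans hA)
    _ = 5 * m := by ring

theorem abs_modeLeft_le (hx : x ∈ Icc a b) : |modeLeft α β κ a b g x| ≤ 5 * m := by
  have hab : a ≤ b := hx.1.trans hx.2
  have hB := abs_amplitude_le hr.right_le hr.left_le hr.exp_le (hF b (right_mem_Icc.2 hab))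
    (hG a (left_mem_Icc.2 hab))
  have hexp := exp_neg_mul_sub_le_one hr.pos.le hx.2
  calc |modeLeft α β κ a b g x| ≤ 4 * m * 1 + m := by
        refine (abs_add_le _ _).trans (add_le_add ?_ (hG x hx))
        rw [abs_mul, Real.abs_exp]
        exact mul_le_mul hB hexp (Real.exp_pos _).le ((abs_nonneg _).trans hB)
    _ = 5 * m := by ring

end ReflectionBounds

/-- The solution `u` of `-u'' + κ² u = g` with the boundary conditions. -/
noncomputable def freeSolution (α β κ a b : ℝ) (g : ℝ → ℝ) (x : ℝ) : ℝ :=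
  (modeLeft α β κ a b g x + modeRight α β κ a b g x) / (2 * κ)

theorem hasDerivAt_freeSolution (hκ : κ ≠ 0) (hg : Continuous g) (x : ℝ) :
    HasDerivAt (freeSolution α β κ a b g)
      ((modeLeft α β κ a b g x - modeRight α β κ a b g x) / 2) x := by
  refine (((hasDerivAt_modeLeft hg x).add (hasDerivAt_modeRight hg x)).div_const _).congr_deriv ?_
  field_simp
  ring

theorem hasDerivAt_deriv_freeSolution (hg : Continuous g) (x : ℝ) :
    HasDerivAt (fun x => (modeLeft α β κ a b g x - modeRight α β κ a b g x) / 2)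
      (κ ^ 2 * freeSolution α β κ a b g x - g x) x := by
  refine (((hasDerivAt_modeLeft hg x).sub (hasDerivAt_modeRight hg x)).div_const 2).congr_deriv ?_
  rw [freeSolution]
  field_simp
  ring

end FreeResolvent

/-! ### The resolvent of the Sturm–Liouville operator -/
section Resolvent

variable {a b : ℝ} [hab : Fact (a < b)]

/-- `R` is a right inverse of `-D² + q + κ²` with values in the functions satisfying the boundary
conditions, with the bounds of Green's function quantified by `C`. -/
structure IsResolvent (C : ℝ) (q : C(Icc a b, ℝ)) (α β κ : ℝ)
    (R : C(Icc a b, ℝ) →L[ℝ] C(Icc a b, ℝ)) : Prop where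
  hasSecondDeriv : ∀ g, HasSecondDeriv α β (R g) (q * R g + κ ^ 2 • R g - g)
  norm_le : ∀ g, ‖R g‖ ≤ C / κ ^ 2 * ‖g‖
  norm_le_integral : ∀ g, ‖R g‖ ≤ C / κ * ∫ x in a..b, |extend g x|
  lipschitz : ∀ g, ∀ x y : Icc a b,
    |R g x - R g y| ≤ C * (∫ t in a..b, |extend g t|) * |(x : ℝ) - y|

/-- `freeSolution` as an operator on continuous functions. -/
noncomputable def freeResolvent (a b : ℝ) [Fact (a < b)] (α β κ : ℝ) (hκ : κ ≠ 0) :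
    C(Icc a b, ℝ) →ₗ[ℝ] C(Icc a b, ℝ) where
  toFun g := restrictIcc (y := freeSolution α β κ a b (extend g)) fun x _ =>
    (hasDerivAt_freeSolution hκ (continuous_extend g) x).continuousAt.continuousWithinAt
  map_add' g h := by
    ext x
    have hfun : extend (g + h) = fun t => extend g t + extend h t := rfl
    change freeSolution _ _ _ _ _ _ _ = freeSolution _ _ _ _ _ _ _ + freeSolution _ _ _ _ _ _ _
    rw [freeSolution, hfun, modeLeft_add (continuous_extend g) (continuous_extend h),
      modeRight_add (continuous_extend g) (continuous_extend h), freeSolution, freeSolution]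
    ring
  map_smul' c g := by
    ext x
    have hfun : extend (c • g) = fun t => c * extend g t := rfl
    change freeSolution _ _ _ _ _ _ _ = c * freeSolution _ _ _ _ _ _ _
    rw [freeSolution, hfun, modeLeft_const_mul, modeRight_const_mul, freeSolution]
    ring

variable {α β κ : ℝ}

theorem extend_freeResolvent (hκ : κ ≠ 0) (g : C(Icc a b, ℝ)) :
    EqOn (extend (freeResolvent a b α β κ hκ g)) (freeSolution α β κ a b (extend g)) (Icc a b) :=
  extend_restrictIcc fun x _ =>
    (hasDerivAt_freeSolution hκ (continuous_extend g) x).continuousAt.continuousWithinAt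

theorem ReflectionBounds.hasSecondDeriv_freeResolvent (hr : ReflectionBounds α β κ a b)
    (g : C(Icc a b, ℝ)) :
    HasSecondDeriv α β (freeResolvent a b α β κ hr.pos.ne' g)
      (κ ^ 2 • freeResolvent a b α β κ hr.pos.ne' g - g) := by
  have hκ := hr.pos.ne'
  have heq := extend_freeResolvent (α := α) (β := β) hκ g
  have hg := continuous_extend g
  refine ⟨_, fun x hx => (hasDerivAt_freeSolution hκ hg x).hasDerivWithinAt.congr_of_mem heq hx,
    fun x hx => (hasDerivAt_deriv_freeSolution hg x).hasDerivWithinAt.congr_deriv ?_, ?_, ?_⟩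
  · rw [extend_sub, extend_smul, heq hx]
  · rw [heq (left_mem_Icc.2 hab.out.le)]
    exact boundary_condition_of_eq_reflectionCoeff_mul hκ hr.left_ne_zero
      (hr.modeRight_left_endpoint _)
  · have := boundary_condition_of_eq_reflectionCoeff_mul hκ hr.right_ne_zero
      (hr.modeLeft_right_endpoint (extend g))
    rw [heq (right_mem_Icc.2 hab.out.le), freeSolution]
    rw [Real.cos_neg, Real.sin_neg] at this
    linear_combination this

theorem ReflectionBounds.norm_freeResolvent_le (hr : ReflectionBounds α β κ a b)
    (g : C(Icc a b, ℝ)) {m : ℝ} (hF : ∀ x ∈ Icc a b, |expConv κ a (extend g) x| ≤ m)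
    (hG : ∀ x ∈ Icc a b, |expConvLeft κ b (extend g) x| ≤ m) :
    ‖freeResolvent a b α β κ hr.pos.ne' g‖ ≤ 5 / κ * m := by
  have hκ := hr.pos
  refine norm_le_of_abs_extend_le fun x hx => ?_
  rw [extend_freeResolvent hr.pos.ne' g hx, freeSolution, abs_div,
    abs_of_pos (by positivity : 0 < 2 * κ), div_le_iff₀ (by positivity)]
  calc _ ≤ 5 * m + 5 * m := (abs_add_le _ _).trans
        (add_le_add (hr.abs_modeLeft_le hF hG hx) (hr.abs_modeRight_le hF hG hx))
    _ = 5 / κ * m * (2 * κ) := by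
        field_simp
        ring

theorem ReflectionBounds.exists_isResolvent_zero (hr : ReflectionBounds α β κ a b) :
    ∃ R : C(Icc a b, ℝ) →L[ℝ] C(Icc a b, ℝ), IsResolvent 5 0 α β κ R := by
  have hκ := hr.pos
  have hsup : ∀ g : C(Icc a b, ℝ), ‖freeResolvent a b α β κ hκ.ne' g‖ ≤ 5 / κ ^ 2 * ‖g‖ := fun g =>
    (hr.norm_freeResolvent_le g (m := ‖g‖ / κ)
      (fun x hx => abs_expConv_le_div hκ (abs_extend_le_norm g) hx.1)
      (fun x hx => abs_expConvLeft_le_div hκ (abs_extend_le_norm g) hx.2)).trans_eq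
        (by field_simp)
  refine ⟨(freeResolvent a b α β κ hκ.ne').mkContinuous _ hsup, fun g => ?_, hsup, fun g => ?_,
    fun g x y => ?_⟩
  · rw [zero_mul, zero_add]
    exact hr.hasSecondDeriv_freeResolvent g
  · exact hr.norm_freeResolvent_le g
      (fun x hx => abs_expConv_le_integral hκ.le (continuous_extend g) hx)
      (fun x hx => abs_expConvLeft_le_integral hκ.le (continuous_extend g) hx)
  · have hderiv := fun x (_ : x ∈ Icc a b) =>
      (hasDerivAt_freeSolution (α := α) (β := β) (a := a) (b := b) hκ.ne'
        (continuous_extend g) x).hasDerivWithinAt (s := Icc a b)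
    refine (convex_Icc a b).norm_image_sub_le_of_norm_hasDerivWithin_le hderiv
      (fun t ht => ?_) y.2 x.2
    have hF := fun x (hx : x ∈ Icc a b) =>
      abs_expConv_le_integral hκ.le (continuous_extend g) hx
    have hG := fun x (hx : x ∈ Icc a b) =>
      abs_expConvLeft_le_integral hκ.le (continuous_extend g) hx
    rw [Real.norm_eq_abs, abs_div, abs_two, div_le_iff₀ two_pos]
    refine (abs_sub _ _).trans
      ((add_le_add (hr.abs_modeLeft_le hF hG ht) (hr.abs_modeRight_le hF hG ht)).trans_eq ?_)
    ring

end Resolvent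

section Perturbation

theorem exists_eq_apply_sub_of_norm_comp_le_half {E : Type*} [NormedAddCommGroup E]
    [NormedSpace ℝ E] [CompleteSpace E] {R₀ Q : E →L[ℝ] E}
    (h : ∀ g, ‖R₀ (Q g)‖ ≤ 1 / 2 * ‖g‖) :
    ∃ R : E →L[ℝ] E, ∀ g, R g = R₀ (g - Q (R g)) ∧ ‖R g‖ ≤ 2 * ‖R₀ g‖ := by
  have hnorm : ‖-(R₀ ∘L Q)‖ < 1 := by
    rw [norm_neg]
    exact (ContinuousLinearMap.opNorm_le_bound _ (by norm_num) h).trans_lt (by norm_num)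
  set U := Units.oneSub (-(R₀ ∘L Q)) hnorm with hU
  have hinv : (1 + R₀ ∘L Q) * ((↑U⁻¹ : E →L[ℝ] E) * R₀) = R₀ := by
    rw [← mul_assoc, ← sub_neg_eq_add, ← Units.val_oneSub _ hnorm, ← hU, Units.mul_inv, one_mul]
  refine ⟨↑U⁻¹ * R₀, fun g => ?_⟩
  have hsum : (↑U⁻¹ * R₀ : E →L[ℝ] E) g + R₀ (Q ((↑U⁻¹ * R₀ : E →L[ℝ] E) g)) = R₀ g :=
    DFunLike.congr_fun hinv g
  rw [map_sub, ← eq_sub_iff_add_eq.2 hsum]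
  refine ⟨rfl, ?_⟩
  have := norm_sub_le (R₀ g) (R₀ (Q ((↑U⁻¹ * R₀ : E →L[ℝ] E) g)))
  rw [← eq_sub_iff_add_eq.2 hsum] at this
  linarith [h ((↑U⁻¹ * R₀ : E →L[ℝ] E) g)]

variable {a b : ℝ} [hab : Fact (a < b)] {C : ℝ} {p q : C(Icc a b, ℝ)} {α β κ : ℝ}

theorem integral_abs_extend_nonneg (g : C(Icc a b, ℝ)) : 0 ≤ ∫ x in a..b, |extend g x| :=
  intervalIntegral.integral_nonneg hab.out.le fun _ _ => abs_nonneg _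

theorem integral_abs_extend_sub_mul_le (g h : C(Icc a b, ℝ)) :
    ∫ x in a..b, |extend (g - q * h) x| ≤ (∫ x in a..b, |extend g x|) + (b - a) * (‖q‖ * ‖h‖) := by
  have hint := (continuous_extend g).abs.intervalIntegrable (μ := volume) a b
  calc ∫ x in a..b, |extend (g - q * h) x| ≤ ∫ x in a..b, (|extend g x| + ‖q‖ * ‖h‖) := by
        refine intervalIntegral.integral_mono_on hab.out.le
          ((continuous_extend _).abs.intervalIntegrable _ _)
          (hint.add intervalIntegrable_const) fun x _ => ?_
        rw [extend_sub, extend_mul]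
        refine (abs_sub _ _).trans (add_le_add le_rfl ?_)
        rw [abs_mul]
        exact mul_le_mul (abs_extend_le_norm _ _) (abs_extend_le_norm _ _) (abs_nonneg _)
          (norm_nonneg _)
    _ = _ := by
        rw [intervalIntegral.integral_add hint intervalIntegrable_const,
          intervalIntegral.integral_const, smul_eq_mul]

theorem IsResolvent.exists_isResolvent_add {R₀ : C(Icc a b, ℝ) →L[ℝ] C(Icc a b, ℝ)}
    (hR₀ : IsResolvent C p α β κ R₀) (hC : 0 ≤ C) (hκ : 0 < κ) (hsq : 2 * C * ‖q‖ ≤ κ ^ 2)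
    (hlen : 2 * C * (b - a) * ‖q‖ ≤ κ) :
    ∃ R : C(Icc a b, ℝ) →L[ℝ] C(Icc a b, ℝ), IsResolvent (2 * C) (p + q) α β κ R := by
  obtain ⟨R, hR⟩ := exists_eq_apply_sub_of_norm_comp_le_half (R₀ := R₀)
    (Q := ContinuousLinearMap.mul ℝ _ q) fun g => by
      calc ‖R₀ (q * g)‖ ≤ C / κ ^ 2 * (‖q‖ * ‖g‖) :=
            (hR₀.norm_le _).trans (mul_le_mul_of_nonneg_left (norm_mul_le _ _) (by positivity))
        _ = C * ‖q‖ / κ ^ 2 * ‖g‖ := by ring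
        _ ≤ 1 / 2 * ‖g‖ := by
            refine mul_le_mul_of_nonneg_right ?_ (norm_nonneg g)
            rw [div_le_div_iff₀ (by positivity) two_pos]
            linarith
  simp only [ContinuousLinearMap.mul_apply'] at hR
  have hint : ∀ g, ‖R g‖ ≤ 2 * C / κ * ∫ x in a..b, |extend g x| := fun g =>
    ((hR g).2.trans (mul_le_mul_of_nonneg_left (hR₀.norm_le_integral g) two_pos.le)).trans_eq
      (by ring)
  refine ⟨R, fun g => ?_, fun g => ?_, hint, fun g x y => ?_⟩
  · have := hR₀.hasSecondDeriv (g - q * R g)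
    rw [← (hR g).1] at this
    convert this using 1
    ring
  · exact ((hR g).2.trans (mul_le_mul_of_nonneg_left (hR₀.norm_le g) two_pos.le)).trans_eq
      (by ring)
  · rw [(hR g).1]
    refine (hR₀.lipschitz _ x y).trans (mul_le_mul_of_nonneg_right ?_ (abs_nonneg _))
    have hdefect : (b - a) * (‖q‖ * ‖R g‖) ≤ ∫ x in a..b, |extend g x| := by
      have hba := sub_pos.2 hab.out
      calc (b - a) * (‖q‖ * ‖R g‖)
          ≤ (b - a) * (‖q‖ * (2 * C / κ * ∫ x in a..b, |extend g x|)) := by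
            gcongr
            exact hint g
        _ = 2 * C * (b - a) * ‖q‖ / κ * ∫ x in a..b, |extend g x| := by ring
        _ ≤ 1 * ∫ x in a..b, |extend g x| := mul_le_mul_of_nonneg_right
            ((div_le_one hκ).2 hlen) (integral_abs_extend_nonneg g)
        _ = ∫ x in a..b, |extend g x| := one_mul _
    calc C * ∫ x in a..b, |extend (g - q * R g) x| ≤ C * (2 * ∫ x in a..b, |extend g x|) :=
          mul_le_mul_of_nonneg_left
            ((integral_abs_extend_sub_mul_le _ _).trans (by linarith)) hC
      _ = 2 * C * ∫ x in a..b, |extend g x| := by ring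

theorem exists_eventually_isResolvent (α β : ℝ) (q : C(Icc a b, ℝ)) :
    ∃ R : ℝ → C(Icc a b, ℝ) →L[ℝ] C(Icc a b, ℝ),
      ∀ᶠ κ in atTop, IsResolvent 10 q α β κ (R κ) := by
  refine Eventually.choice (r := fun κ R => IsResolvent 10 q α β κ R) ?_
  filter_upwards [eventually_reflectionBounds α β hab.out,
    (tendsto_pow_atTop two_ne_zero).eventually_ge_atTop (2 * 5 * ‖q‖),
    eventually_ge_atTop (2 * 5 * (b - a) * ‖q‖)] with κ hr hsq hlen
  obtain ⟨R₀, hR₀⟩ := hr.exists_isResolvent_zero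
  obtain ⟨R, hR⟩ := hR₀.exists_isResolvent_add (by norm_num) hr.pos hsq hlen
  norm_num at hR
  exact ⟨R, hR⟩

end Perturbation

section LocalConvergence

variable {a b : ℝ} [hab : Fact (a < b)] {C : ℝ} {q : C(Icc a b, ℝ)} {α β κ : ℝ}

theorem IsResolvent.abs_sub_le {R : C(Icc a b, ℝ) →L[ℝ] C(Icc a b, ℝ)}
    (hR : IsResolvent C q α β κ R) (hκ : 0 < κ) {g : C(Icc a b, ℝ)} {v ε c η : ℝ} (hη : 0 ≤ η)
    (hsub : Icc (c - η) (c + η) ⊆ Icc a b)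
    (hg : ∀ x ∈ Icc (c - η) (c + η), |extend g x - v| ≤ ε) :
    |extend (κ ^ 2 • R g) c - v| ≤
      ε + ‖q‖ * (C / κ ^ 2 * ‖g‖) + (C * ‖g‖ + |v|) / Real.cosh (κ * η) := by
  obtain ⟨u', hu, hu', -⟩ := hR.hasSecondDeriv g
  have hbound : ∀ x, |extend (κ ^ 2 • R g) x - v| ≤ C * ‖g‖ + |v| := fun x => by
    refine (abs_sub _ _).trans (add_le_add_left ?_ _)
    rw [extend_smul, abs_mul, abs_of_pos (by positivity : 0 < κ ^ 2)]
    calc κ ^ 2 * |extend (R g) x| ≤ κ ^ 2 * (C / κ ^ 2 * ‖g‖) := by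
          gcongr
          exact (abs_extend_le_norm _ x).trans (hR.norm_le g)
      _ = C * ‖g‖ := by field_simp
  refine abs_le_add_div_cosh_of_second_deriv_eq hη (w := fun x => extend (κ ^ 2 • R g) x - v)
    (w' := fun x => κ ^ 2 * u' x) (h := fun x => extend g x - v - extend q x * extend (R g) x)
    (fun x hx => (((hu x (hsub hx)).mono hsub).const_mul _).sub_const v)
    (fun x hx => (((hu' x (hsub hx)).mono hsub).const_mul _).congr_deriv ?_) (fun x hx => ?_)
    (hbound _) (hbound _)
  · simp only [extend_sub, extend_add, extend_mul, extend_smul]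
    ring
  · refine (abs_sub _ _).trans (add_le_add (hg x hx) ?_)
    rw [abs_mul]
    exact mul_le_mul (abs_extend_le_norm _ _) ((abs_extend_le_norm _ _).trans (hR.norm_le g))
      (abs_nonneg _) (norm_nonneg _)

theorem tendsto_localization_error (A B C D : ℝ) {η : ℝ} (hη : 0 < η) :
    Tendsto (fun κ : ℝ => A * (B / κ ^ 2 * C) + D / Real.cosh (κ * η)) atTop (𝓝 0) := by
  have hcosh : Tendsto (fun κ : ℝ => Real.cosh (κ * η)) atTop atTop :=
    tendsto_atTop_mono' _ ((eventually_ge_atTop 0).mono fun κ hκ =>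
      (Real.self_le_sinh_iff.2 (mul_nonneg hκ hη.le)).trans (Real.sinh_lt_cosh _).le)
      (tendsto_id.atTop_mul_const hη)
  have hsq : Tendsto (fun κ : ℝ => B / κ ^ 2) atTop (𝓝 0) :=
    tendsto_const_nhds.div_atTop (tendsto_pow_atTop two_ne_zero)
  simpa using ((hsq.mul_const C).const_mul A).add (tendsto_const_nhds (x := D) |>.div_atTop hcosh)

variable {R : ℝ → C(Icc a b, ℝ) →L[ℝ] C(Icc a b, ℝ)}

theorem tendstoLocallyUniformlyOn_smul_resolvent (hC : 0 ≤ C)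
    (hR : ∀ᶠ κ in atTop, IsResolvent C q α β κ (R κ)) {g : ℝ → C(Icc a b, ℝ)} {f : C(Icc a b, ℝ)}
    {B : ℝ} (hg : ∀ᶠ κ in atTop, ‖g κ‖ ≤ B)
    (hgf : TendstoLocallyUniformlyOn (fun κ => extend (g κ)) (extend f) atTop (Ioo a b)) :
    TendstoLocallyUniformlyOn (fun κ => extend (κ ^ 2 • R κ (g κ))) (extend f) atTop
      (Ioo a b) := by
  rw [Metric.tendstoLocallyUniformlyOn_iff] at hgf ⊢
  intro ε hε x hx
  obtain ⟨t, ht, htg⟩ := hgf (ε / 4) (by positivity) x hx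
  rw [isOpen_Ioo.nhdsWithin_eq hx] at ht ⊢
  have hnear : ∀ᶠ y in 𝓝 x, y ∈ t ∧ y ∈ Ioo a b ∧ dist (extend f y) (extend f x) < ε / 4 := by
    filter_upwards [ht, isOpen_Ioo.mem_nhds hx,
      Metric.tendsto_nhds.1 (continuous_extend f).continuousAt (ε / 4) (by positivity)]
      with y hyt hyab hyf using ⟨hyt, hyab, hyf⟩
  obtain ⟨r, hr, hball⟩ := Metric.nhds_basis_ball.eventually_iff.1 hnear
  refine ⟨Metric.ball x (r / 2), Metric.ball_mem_nhds x (by positivity), ?_⟩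
  have hη : 0 < r / 3 := by positivity
  filter_upwards [hR, hg, htg, eventually_gt_atTop 0, (tendsto_localization_error ‖q‖ C B
    (C * B + |extend f x|) hη).eventually_lt_const (by positivity : 0 < ε / 4)]
    with κ hRκ hgκ htκ hκ hlt y hy
  have hsub : ∀ z ∈ Icc (y - r / 3) (y + r / 3), z ∈ Metric.ball x r := fun z hz => by
    rw [Metric.mem_ball, Real.dist_eq, abs_lt] at *
    constructor <;> linarith [hz.1, hz.2]
  have hloc := hRκ.abs_sub_le hκ hη.le (g := g κ) (v := extend f x) (ε := ε / 2)
    (fun z hz => Ioo_subset_Icc_self (hball (hsub z hz)).2.1) fun z hz => by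
      have := dist_triangle_left (extend (g κ) z) (extend f x) (extend f z)
      rw [Real.dist_eq] at this
      linarith [htκ z (hball (hsub z hz)).1, (hball (hsub z hz)).2.2]
  have hfy := (hball (Metric.ball_subset_ball (by linarith) hy)).2.2
  have hmono : ‖q‖ * (C / κ ^ 2 * ‖g κ‖) + (C * ‖g κ‖ + |extend f x|) / Real.cosh (κ * (r / 3)) ≤
      ‖q‖ * (C / κ ^ 2 * B) + (C * B + |extend f x|) / Real.cosh (κ * (r / 3)) := by
    have := Real.cosh_pos (κ * (r / 3))
    gcongr
  rw [← Real.dist_eq] at hloc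
  linarith [dist_triangle_right (extend f y) (extend (κ ^ 2 • R κ (g κ)) y) (extend f x)]

theorem IsResolvent.norm_smul_pow_le {R : C(Icc a b, ℝ) →L[ℝ] C(Icc a b, ℝ)}
    (hR : IsResolvent C q α β κ R) (hC : 0 ≤ C) (hκ : 0 < κ) (f : C(Icc a b, ℝ)) (k : ℕ) :
    ‖((κ ^ 2 • R) ^ k) f‖ ≤ C ^ k * ‖f‖ := by
  induction k with
  | zero => simp
  | succ k ih =>
    rw [pow_succ', _root_.mul_apply_eq_comp, _root_.smul_apply, norm_smul,
      Real.norm_of_nonneg (sq_nonneg κ)]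
    calc κ ^ 2 * ‖R (((κ ^ 2 • R) ^ k) f)‖ ≤ κ ^ 2 * (C / κ ^ 2 * (C ^ k * ‖f‖)) := by
          gcongr
          exact (hR.norm_le _).trans (mul_le_mul_of_nonneg_left ih (by positivity))
      _ = C ^ (k + 1) * ‖f‖ := by
          field_simp
          ring

theorem tendstoLocallyUniformlyOn_smul_resolvent_pow (hC : 0 ≤ C)
    (hR : ∀ᶠ κ in atTop, IsResolvent C q α β κ (R κ)) (f : C(Icc a b, ℝ)) (k : ℕ) :
    TendstoLocallyUniformlyOn (fun κ => extend (((κ ^ 2 • R κ) ^ k) f)) (extend f) atTop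
      (Ioo a b) := by
  induction k with
  | zero =>
    exact fun U hU _ _ => ⟨univ, univ_mem, Eventually.of_forall fun _ _ _ => refl_mem_uniformity hU⟩
  | succ k ih =>
    simp only [pow_succ' _ k]
    refine tendstoLocallyUniformlyOn_smul_resolvent hC hR (B := C ^ k * ‖f‖) ?_ ih
    filter_upwards [hR, eventually_gt_atTop 0] with κ hRκ hκ using hRκ.norm_smul_pow_le hC hκ f k

theorem tendstoLocallyUniformlyOn_aeval_smul_resolvent (hC : 0 ≤ C)
    (hR : ∀ᶠ κ in atTop, IsResolvent C q α β κ (R κ)) (f : C(Icc a b, ℝ)) (p : Polynomial ℝ) :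
    TendstoLocallyUniformlyOn (fun κ => extend (Polynomial.aeval (κ ^ 2 • R κ) p f))
      (extend (p.eval 1 • f)) atTop (Ioo a b) := by
  induction p using Polynomial.induction_on' with
  | add p r hp hr =>
    rw [Polynomial.eval_add, add_smul]
    refine (hp.add hr).congr fun κ x _ => ?_
    rw [map_add]
    rfl
  | monomial k c =>
    have huc : UniformContinuous fun y : ℝ => c * y := uniformContinuous_const_smul c
    have := huc.comp_tendstoLocallyUniformlyOn
      (tendstoLocallyUniformlyOn_smul_resolvent_pow hC hR f k)
    rw [Polynomial.eval_monomial, one_pow, mul_one]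
    refine this.congr fun κ x _ => ?_
    simp [Polynomial.aeval_monomial, extend_smul]

end LocalConvergence

/-! ### Completeness of the eigenfunctions -/
section Completeness

open scoped NNReal

theorem isCompact_setOf_abs_le_lipschitzWith {X : Type*} [PseudoMetricSpace X]
    (M : ℝ) (L : ℝ≥0) : IsCompact {u : C(X, ℝ) | (∀ x, |u x| ≤ M) ∧ LipschitzWith L u} := by
  refine ArzelaAscoli.isCompact_of_equicontinuous _ ?_
    (LipschitzWith.uniformEquicontinuous _ L fun u => u.2.2).equicontinuous
  have himage : ContinuousMap.toFun '' {u : C(X, ℝ) | (∀ x, |u x| ≤ M) ∧ LipschitzWith L u} =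
      univ.pi (fun _ => Icc (-M) M) ∩ {f | LipschitzWith L f} := by
    ext f
    simp only [mem_image, mem_inter_iff, mem_univ_pi, mem_Icc, ← abs_le]
    exact ⟨fun ⟨_, hu, huf⟩ => huf ▸ hu, fun hf => ⟨⟨f, hf.2.continuous⟩, hf, rfl⟩⟩
  rw [himage]
  exact (isCompact_univ_pi fun _ => isCompact_Icc).inter_right
    (isClosed_setOfPred_lipschitzWith L)

section DenseInclusion

variable {E H : Type*} [NormedAddCommGroup E] [NormedSpace ℝ E] [CompleteSpace E]
  [NormedAddCommGroup H] [InnerProductSpace ℝ H] {e : E →L[ℝ] H} {R : E →L[ℝ] E}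
  {K : Set E}

theorem exists_isCompactOperator_extension (he : DenseRange e) (hK : IsCompact K)
    (hRK : ∀ g, ‖e g‖ ≤ 1 → R g ∈ K) (hR : ∃ C, ∀ g, ‖R g‖ ≤ C * ‖e g‖) :
    ∃ S : H →L[ℝ] E, IsCompactOperator S ∧ ∀ g, S (e g) = R g := by
  have hS : ∀ g, (R : E →ₗ[ℝ] E).extendOfNorm (e : E →ₗ[ℝ] H) (e g) = R g := fun g =>
    LinearMap.extendOfNorm_eq (f := (R : E →ₗ[ℝ] E)) (e := (e : E →ₗ[ℝ] H)) he hR g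
  refine ⟨_, ⟨K, hK, mem_of_superset (Metric.ball_mem_nhds 0 one_pos) fun x hx => ?_⟩, hS⟩
  have hclosure := he.open_subset_closure_inter Metric.isOpen_ball hx
  refine closure_minimal ?_ (hK.isClosed.preimage (ContinuousLinearMap.continuous _)) hclosure
  rintro _ ⟨hg, g, rfl⟩
  rw [mem_preimage, hS]
  exact hRK g (mem_ball_zero_iff.1 hg).le

theorem eq_zero_of_forall_inner_eigenvector_eq_zero [CompleteSpace H] (he : DenseRange e)
    (hinj : Function.Injective e) (hRinj : Function.Injective R) (hK : IsCompact K)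
    (hRK : ∀ g, ‖e g‖ ≤ 1 → R g ∈ K) (hR : ∃ C, ∀ g, ‖R g‖ ≤ C * ‖e g‖)
    (hsymm : ∀ g h, ⟪e (R g), e h⟫_ℝ = ⟪e g, e (R h)⟫_ℝ) {g : E}
    (hg : ∀ μ : ℝ, ∀ v : E, μ ≠ 0 → v ≠ 0 → R v = μ • v → ⟪e g, e v⟫_ℝ = 0) : g = 0 := by
  obtain ⟨S, hS, hSR⟩ := exists_isCompactOperator_extension he hK hRK hR
  have hT : (e ∘L S : H →ₗ[ℝ] H).IsSymmetric := by
    refine he.induction_on₂ ?_ fun u v => ?_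
    · refine isClosed_eq ?_ ?_ <;> simp only [ContinuousLinearMap.coe_coe] <;> fun_prop
    · simpa only [ContinuousLinearMap.coe_coe, ContinuousLinearMap.comp_apply, hSR] using hsymm u v
  have horth := ContinuousLinearMap.orthogonalComplement_iSup_eigenspaces_eq_bot
    (hS.clm_comp e) hT
  have hTg : e (S (e g)) ∈ (⨆ μ, Module.End.eigenspace (e ∘L S : H →ₗ[ℝ] H) μ)ᗮ := by
    rw [← Submodule.iInf_orthogonal, Submodule.mem_iInf]
    intro μ w hw
    have hw' : e (S w) = μ • w := Module.End.mem_eigenspace_iff.1 hw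
    rw [show ⟪w, e (S (e g))⟫_ℝ = ⟪e (S w), e g⟫_ℝ from (hT w (e g)).symm, hw', inner_smul_left]
    rcases eq_or_ne μ 0 with rfl | hμ
    · simp
    have hwv : w = e (μ⁻¹ • S w) := by rw [map_smul, hw', inv_smul_smul₀ hμ]
    have heigen : R (μ⁻¹ • S w) = μ • μ⁻¹ • S w := by
      rw [← hSR, ← hwv, smul_inv_smul₀ hμ]
    rcases eq_or_ne (μ⁻¹ • S w) 0 with hzero | hne
    · rw [hwv, hzero, map_zero, inner_zero_left, mul_zero]
    · rw [hwv, real_inner_comm, hg μ _ hμ hne heigen, mul_zero]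
  rw [horth, Submodule.mem_bot, hSR] at hTg
  exact (map_eq_zero_iff R hRinj).1 ((map_eq_zero_iff e hinj).1 hTg)

end DenseInclusion

variable {a b : ℝ} [hab : Fact (a < b)] {C : ℝ} {q : C(Icc a b, ℝ)} {α β κ lam : ℝ}

theorem inner_toL2_mul_left (q u v : C(Icc a b, ℝ)) :
    ⟪toL2 (q * u), toL2 v⟫_ℝ = ⟪toL2 u, toL2 (q * v)⟫_ℝ := by
  rw [inner_toL2, inner_toL2]
  refine intervalIntegral.integral_congr fun x _ => ?_
  simp only [extend_mul]
  ring

theorem HasSecondDeriv.eq_zero {w : C(Icc a b, ℝ)} (h : HasSecondDeriv α β 0 w) : w = 0 := by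
  obtain ⟨u', hu, hu', -⟩ := h
  have hzero : EqOn u' 0 (Icc a b) := fun x hx =>
    (uniqueDiffOn_Icc hab.out x hx).eq_deriv _ (hu x hx) (hasDerivWithinAt_const x _ (0 : ℝ))
  ext x
  rw [← extend_coe]
  exact (uniqueDiffOn_Icc hab.out x x.2).eq_deriv _ (hu' x x.2)
    ((hasDerivWithinAt_const (x : ℝ) _ (0 : ℝ)).congr hzero (hzero x.2))

namespace IsResolvent

variable {R : C(Icc a b, ℝ) →L[ℝ] C(Icc a b, ℝ)} (hR : IsResolvent C q α β κ R)
include hR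

theorem inner_toL2_comm (g h : C(Icc a b, ℝ)) :
    ⟪toL2 (R g), toL2 h⟫_ℝ = ⟪toL2 g, toL2 (R h)⟫_ℝ := by
  have hlagrange := (hR.hasSecondDeriv g).inner_toL2_comm (hR.hasSecondDeriv h)
  have hq := inner_toL2_mul_left q (R g) (R h)
  simp only [map_sub, map_add, map_smul, inner_sub_left, inner_add_left, inner_sub_right,
    inner_add_right, real_inner_smul_left, real_inner_smul_right, hq] at hlagrange
  linarith

theorem injective : Function.Injective R := by
  refine (injective_iff_map_eq_zero _).2 fun g hg => ?_
  have h := hR.hasSecondDeriv g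
  rw [hg, mul_zero, smul_zero, add_zero, zero_sub] at h
  exact neg_eq_zero.1 h.eq_zero

theorem isEigensolution_of_apply_eq_smul {μ : ℝ} {v : C(Icc a b, ℝ)} (hμ : μ ≠ 0)
    (hv : R v = μ • v) : IsEigensolution q α β (μ⁻¹ - κ ^ 2) v := by
  have h := (hR.hasSecondDeriv v).const_smul μ⁻¹
  rw [hv, inv_smul_smul₀ hμ] at h
  have hscale : μ⁻¹ • (q * μ • v + κ ^ 2 • μ • v - v) = q * v - (μ⁻¹ - κ ^ 2) • v := by
    rw [smul_sub, smul_add, mul_smul_comm, smul_comm _ μ v, inv_smul_smul₀ hμ, inv_smul_smul₀ hμ,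
      sub_smul]
    abel
  rwa [IsEigensolution, ← hscale]

theorem eq_zero_of_isEigensolution {w : C(Icc a b, ℝ)}
    (hw : IsEigensolution q α β (-κ ^ 2) w) : w = 0 := by
  have hlagrange := HasSecondDeriv.inner_toL2_comm hw (hR.hasSecondDeriv w)
  have hq := inner_toL2_mul_left q w (R w)
  simp only [map_sub, map_add, map_smul, inner_sub_left, inner_sub_right, inner_add_right,
    real_inner_smul_left, real_inner_smul_right, hq] at hlagrange
  have hself : ⟪toL2 w, toL2 w⟫_ℝ = 0 := by linarith
  exact (map_eq_zero_iff toL2 toL2_injective).1 (inner_self_eq_zero.1 hself)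

theorem apply_eq_of_hasSecondDeriv {u w : C(Icc a b, ℝ)} (hu : HasSecondDeriv α β u w) :
    R (q * u + κ ^ 2 • u - w) = u := by
  refine sub_eq_zero.1 (hR.eq_zero_of_isEigensolution ?_)
  have h := (hR.hasSecondDeriv (q * u + κ ^ 2 • u - w)).sub hu
  rw [IsEigensolution]
  convert h using 1
  rw [neg_smul, smul_sub, mul_sub]
  abel

theorem smul_apply_of_isEigensolution {v : C(Icc a b, ℝ)} (hv : IsEigensolution q α β lam v) :
    (lam + κ ^ 2) • R v = v := by
  have h := hR.apply_eq_of_hasSecondDeriv hv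
  rwa [show q * v + κ ^ 2 • v - (q * v - lam • v) = (lam + κ ^ 2) • v by rw [add_smul]; abel,
    map_smul] at h

theorem norm_le_norm_toL2 (hC : 0 ≤ C) (hκ : 0 < κ) (g : C(Icc a b, ℝ)) :
    ‖R g‖ ≤ C / κ * ‖toL2 (1 : C(Icc a b, ℝ))‖ * ‖toL2 g‖ := by
  rw [mul_assoc]
  exact (hR.norm_le_integral g).trans
    (mul_le_mul_of_nonneg_left (integral_abs_extend_le g) (by positivity))

theorem exists_isCompact_apply_mem (hC : 0 ≤ C) (hκ : 0 < κ) :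
    ∃ K : Set C(Icc a b, ℝ), IsCompact K ∧ ∀ g, ‖toL2 g‖ ≤ 1 → R g ∈ K := by
  refine ⟨_, isCompact_setOf_abs_le_lipschitzWith (C / κ * ‖toL2 (1 : C(Icc a b, ℝ))‖)
    (C * ‖toL2 (1 : C(Icc a b, ℝ))‖).toNNReal,
    fun g hg => ⟨fun x => ?_, LipschitzWith.of_dist_le' fun x y => ?_⟩⟩
  · exact ((R g).norm_coe_le_norm x).trans
      ((hR.norm_le_norm_toL2 hC hκ g).trans (mul_le_of_le_one_right (by positivity) hg))
  · refine (hR.lipschitz g x y).trans (mul_le_mul_of_nonneg_right ?_ (abs_nonneg _))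
    exact mul_le_mul_of_nonneg_left
      ((integral_abs_extend_le g).trans (mul_le_of_le_one_right (norm_nonneg _) hg)) hC

theorem eq_zero_of_forall_inner_eq_zero (hC : 0 ≤ C) (hκ : 0 < κ) {g : C(Icc a b, ℝ)}
    (hg : ∀ lam v, v ≠ 0 → IsEigensolution q α β lam v → ⟪toL2 g, toL2 v⟫_ℝ = 0) : g = 0 := by
  obtain ⟨K, hK, hRK⟩ := hR.exists_isCompact_apply_mem hC hκ
  exact eq_zero_of_forall_inner_eigenvector_eq_zero denseRange_toL2 toL2_injective hR.injective
    hK hRK ⟨_, hR.norm_le_norm_toL2 hC hκ⟩ hR.inner_toL2_comm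
    fun μ v hμ hv0 hv => hg _ v hv0 (hR.isEigensolution_of_apply_eq_smul hμ hv)

end IsResolvent

end Completeness

/-! ### Eigensystems -/
section Eigensystem

theorem map_aeval_apply {E : Type*} [NormedAddCommGroup E] [NormedSpace ℝ E] {T : E →L[ℝ] E}
    {φ : E →ₗ[ℝ] ℝ} {μ : ℝ} (hφ : ∀ g, φ (T g) = μ * φ g) (p : Polynomial ℝ) (g : E) :
    φ (Polynomial.aeval T p g) = p.eval μ * φ g := by
  induction p using Polynomial.induction_on generalizing g with
  | C r => simp [Algebra.algebraMap_eq_smul_one]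
  | add p r hp hr => rw [map_add, _root_.add_apply, map_add, hp, hr, Polynomial.eval_add, add_mul]
  | monomial n r ih =>
    rw [pow_succ, ← mul_assoc, map_mul, Polynomial.aeval_X, _root_.mul_apply_eq_comp, ih, hφ,
      Polynomial.eval_mul_X, mul_assoc]

theorem not_tendsto_of_orthonormal {H : Type*} [NormedAddCommGroup H] [InnerProductSpace ℝ H]
    {v : ℕ → H} (hv : Orthonormal ℝ v) (w : H) : ¬ Tendsto v atTop (𝓝 w) := fun hw => by
  have hlim : ∀ n, ⟪v n, w⟫_ℝ = 0 := fun n =>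
    tendsto_nhds_unique (tendsto_const_nhds.inner hw) (tendsto_const_nhds.congr' (by
      filter_upwards [eventually_ne_atTop n] with m hm using (hv.2 hm.symm).symm))
  have hzero : ⟪w, w⟫_ℝ = 0 := tendsto_nhds_unique (hw.inner tendsto_const_nhds)
    (tendsto_const_nhds.congr fun n => (hlim n).symm)
  have hnorm := tendsto_nhds_unique hw.norm (tendsto_const_nhds.congr fun n => (hv.1 n).symm)
  rw [inner_self_eq_zero.1 hzero, norm_zero] at hnorm
  exact zero_ne_one hnorm

variable {a b : ℝ} [hab : Fact (a < b)] {C : ℝ} {q : C(Icc a b, ℝ)} {α β κ lam μ : ℝ}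

theorem IsEigensolution.inner_toL2_eq_zero {u v : C(Icc a b, ℝ)}
    (hu : IsEigensolution q α β lam u) (hv : IsEigensolution q α β μ v) (hne : lam ≠ μ) :
    ⟪toL2 u, toL2 v⟫_ℝ = 0 := by
  have hlagrange := HasSecondDeriv.inner_toL2_comm hu hv
  simp only [map_sub, map_smul, inner_sub_left, inner_sub_right, real_inner_smul_left,
    real_inner_smul_right, inner_toL2_mul_left q u v, sub_right_inj] at hlagrange
  exact (mul_eq_mul_right_iff.1 hlagrange).resolve_left hne

theorem IsResolvent.inner_toL2_aeval {R : C(Icc a b, ℝ) →L[ℝ] C(Icc a b, ℝ)}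
    (hR : IsResolvent C q α β κ R) {v : C(Icc a b, ℝ)} (hv : IsEigensolution q α β lam v)
    (hlam : lam + κ ^ 2 ≠ 0) (p : Polynomial ℝ) (g : C(Icc a b, ℝ)) :
    ⟪toL2 (Polynomial.aeval (κ ^ 2 • R) p g), toL2 v⟫_ℝ =
      p.eval (κ ^ 2 / (lam + κ ^ 2)) * ⟪toL2 g, toL2 v⟫_ℝ := by
  have hRv : R v = (lam + κ ^ 2)⁻¹ • v := by
    rw [eq_inv_smul_iff₀ hlam, hR.smul_apply_of_isEigensolution hv]
  have hcoeff : ∀ g, ⟪toL2 v, toL2 ((κ ^ 2 • R) g)⟫_ℝ =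
      κ ^ 2 / (lam + κ ^ 2) * ⟪toL2 v, toL2 g⟫_ℝ := fun g => by
    rw [_root_.smul_apply, map_smul, real_inner_smul_right, ← hR.inner_toL2_comm, hRv, map_smul,
      real_inner_smul_left, ← mul_assoc, div_eq_mul_inv]
  rw [real_inner_comm, real_inner_comm (toL2 v)]
  exact map_aeval_apply (φ := innerₗ _ (toL2 v) ∘ₗ (toL2 : C(Icc a b, ℝ) →L[ℝ] _).toLinearMap)
    hcoeff p g

/-- `lam` enumerates increasingly all eigenvalues of `-u'' + q u = lam u` with the boundary
conditions of angles `α` and `β`, and `Y` consists of `L²`-normalized eigenfunctions. -/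
structure IsEigensystem (q : C(Icc a b, ℝ)) (α β : ℝ) (lam : ℕ → ℝ) (Y : ℕ → C(Icc a b, ℝ)) :
    Prop where
  isEigensolution : ∀ n, IsEigensolution q α β (lam n) (Y n)
  norm_toL2 : ∀ n, ‖toL2 (Y n)‖ = 1
  strictMono : StrictMono lam
  exists_eq : ∀ μ v, v ≠ 0 → IsEigensolution q α β μ v → ∃ n, lam n = μ

namespace IsEigensystem

variable {lam : ℕ → ℝ} {Y : ℕ → C(Icc a b, ℝ)} (hS : IsEigensystem q α β lam Y)
include hS

theorem ne_zero (n : ℕ) : Y n ≠ 0 := fun h => by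
  simpa [h] using hS.norm_toL2 n

theorem orthonormal : Orthonormal ℝ fun n => toL2 (Y n) :=
  ⟨hS.norm_toL2, fun _ _ hne => (hS.isEigensolution _).inner_toL2_eq_zero (hS.isEigensolution _)
    (hS.strictMono.injective.ne hne)⟩

theorem eq_zero_of_forall_inner_eq_zero {g : C(Icc a b, ℝ)}
    (hg : ∀ n, ⟪toL2 g, toL2 (Y n)⟫_ℝ = 0) : g = 0 := by
  obtain ⟨R, hR⟩ := exists_eventually_isResolvent α β q
  obtain ⟨κ, hRκ, hκ⟩ := (hR.and (eventually_gt_atTop 0)).exists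
  refine hRκ.eq_zero_of_forall_inner_eq_zero (by norm_num) hκ fun μ v hv0 hv => ?_
  obtain ⟨n, rfl⟩ := hS.exists_eq μ v hv0 hv
  obtain ⟨c, rfl⟩ := exists_eq_smul_of_isEigensolution hv (hS.isEigensolution n) (hS.ne_zero n)
  rw [map_smul, real_inner_smul_right, hg, mul_zero]

theorem tendsto_atTop : Tendsto lam atTop atTop := by
  refine (tendsto_atTop_of_monotone hS.strictMono.monotone).resolve_right fun ⟨l, hl⟩ => ?_
  obtain ⟨R, hR⟩ := exists_eventually_isResolvent α β q
  obtain ⟨κ, hRκ, hκ⟩ := (hR.and (eventually_gt_atTop 0)).exists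
  obtain ⟨K, hK, hRK⟩ := hRκ.exists_isCompact_apply_mem (by norm_num) hκ
  obtain ⟨w, -, φ, hφ, hw⟩ := hK.tendsto_subseq fun n => hRK (Y n) (hS.norm_toL2 n).le
  refine not_tendsto_of_orthonormal (hS.orthonormal.comp φ hφ.injective)
    (toL2 ((l + κ ^ 2) • w)) (((toL2 (a := a) (b := b)).continuous.tendsto _).comp ?_)
  refine (((hl.comp hφ.tendsto_atTop).add_const (κ ^ 2)).smul hw).congr fun n => ?_
  exact hRκ.smul_apply_of_isEigensolution (hS.isEigensolution (φ n))

end IsEigensystem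

end Eigensystem

/-! ### Asymptotics of the eigenfunctions -/
section Asymptotics

theorem abs_sub_trig_le_of_second_deriv_eq {a b s M : ℝ} {u u' h : ℝ → ℝ} (hab : a ≤ b)
    (hs : 0 < s) (hu : ∀ x ∈ Icc a b, HasDerivWithinAt u (u' x) (Icc a b) x)
    (hu' : ∀ x ∈ Icc a b, HasDerivWithinAt u' (h x - s ^ 2 * u x) (Icc a b) x)
    (hh : ContinuousOn h (Icc a b)) (hM : ∀ x ∈ Icc a b, |h x| ≤ M) :
    |u b - (u a * Real.cos (s * (b - a)) + u' a / s * Real.sin (s * (b - a)))| ≤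
      M * (b - a) / s := by
  have hduhamel : ∫ x in a..b, h x * Real.sin (s * (b - x)) / s =
      u b - (u a * Real.cos (s * (b - a)) + u' a / s * Real.sin (s * (b - a))) := by
    rw [integral_eq_sub_of_hasDerivWithinAt
      (F := fun x => u' x * (Real.sin (s * (b - x)) / s) + u x * Real.cos (s * (b - x))) hab
      (fun x hx => ?_) (by fun_prop)]
    · simp only [sub_self, mul_zero, Real.sin_zero, Real.cos_zero, zero_div]
      ring
    · have hphase : HasDerivWithinAt (fun x => s * (b - x)) (s * -1) (Icc a b) x :=
        ((hasDerivWithinAt_id x (Icc a b)).const_sub b).const_mul s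
      refine (((hu' x hx).mul (hphase.sin.div_const s)).add
        ((hu x hx).mul hphase.cos)).congr_deriv ?_
      field_simp
      ring
  rw [← hduhamel, ← Real.norm_eq_abs]
  refine (intervalIntegral.norm_integral_le_of_norm_le_const (C := M / s) fun x hx => ?_).trans_eq
    (by rw [abs_of_nonneg (sub_nonneg.2 hab)]; ring)
  rw [uIoc_of_le hab] at hx
  rw [Real.norm_eq_abs, abs_div, abs_mul, abs_of_pos hs]
  have hx' := hM x (Ioc_subset_Icc_self hx)
  gcongr
  exact (mul_le_of_le_one_right (abs_nonneg _) (Real.abs_sin_le_one _)).trans hx'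

theorem abs_mul_cos_add_mul_sin_le (P Q t : ℝ) :
    |P * Real.cos t + Q * Real.sin t| ≤ |P| + |Q| := by
  refine (abs_add_le _ _).trans ?_
  rw [abs_mul, abs_mul]
  gcongr
  · exact mul_le_of_le_one_right (abs_nonneg P) (Real.abs_cos_le_one t)
  · exact mul_le_of_le_one_right (abs_nonneg Q) (Real.abs_sin_le_one t)

theorem exists_phase_abs_trig_sub_sin_le (α : ℝ) :
    ∃ θ c : ℝ, 0 ≤ c ∧ ∀ s ≥ 1, ∀ P Q : ℝ, P * Real.cos α + s * Q * Real.sin α = 0 →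
      ∃ A : ℝ, |P| + |Q| ≤ (1 + c) * |A| ∧
        ∀ t, |P * Real.cos t + Q * Real.sin t - A * Real.sin (t + θ)| ≤ c * |A| / s := by
  rcases eq_or_ne (Real.sin α) 0 with hα | hα
  · refine ⟨0, 0, le_rfl, fun s _ P Q hPQ => ⟨Q, ?_⟩⟩
    have hcos : Real.cos α ≠ 0 := fun h => by simpa [hα, h] using Real.sin_sq_add_cos_sq α
    rw [hα, mul_zero, add_zero] at hPQ
    simp [(mul_eq_zero.1 hPQ).resolve_right hcos]
  · refine ⟨Real.pi / 2, |Real.cos α / Real.sin α|, abs_nonneg _, fun s hs P Q hPQ => ⟨P, ?_⟩⟩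
    have hs0 : 0 < s := by linarith
    have hQ : |Q| = |Real.cos α / Real.sin α| * |P| / s := by
      have hQ' : Q = -(Real.cos α / Real.sin α * P / s) := by
        field_simp
        linarith
      rw [hQ', abs_neg, abs_div, abs_mul, abs_of_pos hs0]
    refine ⟨?_, fun t => ?_⟩
    · rw [add_mul, one_mul, hQ]
      gcongr
      exact div_le_self (by positivity) hs
    · rw [Real.sin_add_pi_div_two, add_sub_cancel_left, abs_mul, ← hQ]
      exact mul_le_of_le_one_right (abs_nonneg Q) (Real.abs_sin_le_one t)

variable {a b : ℝ}

/-- The model `x ↦ sin (s (x - a) + θ)` of an eigenfunction of eigenvalue `s ^ 2`. -/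
noncomputable def shiftedSine (a b s θ : ℝ) : C(Icc a b, ℝ) :=
  ⟨fun x => Real.sin (s * (x - a) + θ), by fun_prop⟩

theorem norm_shiftedSine_le (s θ : ℝ) : ‖shiftedSine a b s θ‖ ≤ 1 :=
  (ContinuousMap.norm_le _ zero_le_one).2 fun _ => Real.abs_sin_le_one _

variable [hab : Fact (a < b)] {q : C(Icc a b, ℝ)} {α β s : ℝ}

theorem IsEigensolution.exists_abs_sub_trig_le {Y : C(Icc a b, ℝ)} (hs : 0 < s)
    (hY : IsEigensolution q α β (s ^ 2) Y) :
    ∃ P Q : ℝ, P * Real.cos α + s * Q * Real.sin α = 0 ∧ ∀ x ∈ Icc a b,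
      |extend Y x - (P * Real.cos (s * (x - a)) + Q * Real.sin (s * (x - a)))| ≤
        ‖q‖ * ‖Y‖ * (b - a) / s := by
  obtain ⟨Y', hd, hd', hbc, -⟩ := hY
  refine ⟨extend Y a, Y' a / s, by rwa [mul_div_cancel₀ _ hs.ne'], fun x hx => ?_⟩
  have hsub : Icc a x ⊆ Icc a b := Icc_subset_Icc_right hx.2
  refine (abs_sub_trig_le_of_second_deriv_eq (h := extend (q * Y)) (M := ‖q‖ * ‖Y‖) hx.1 hs
    (fun t ht => (hd t (hsub ht)).mono hsub) (fun t ht => (hd' t (hsub ht)).mono hsub)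
    (continuous_extend _).continuousOn
    fun t _ => (abs_extend_le_norm _ t).trans (norm_mul_le _ _)).trans ?_
  have hxb := hx.2
  gcongr

theorem IsEigensolution.exists_abs_sub_trig_le_of_le {Y : C(Icc a b, ℝ)} (hs : 0 < s)
    (hqs : 2 * (‖q‖ * (b - a)) ≤ s) (hY : IsEigensolution q α β (s ^ 2) Y) :
    ∃ P Q : ℝ, P * Real.cos α + s * Q * Real.sin α = 0 ∧ ∀ x ∈ Icc a b,
      |extend Y x - (P * Real.cos (s * (x - a)) + Q * Real.sin (s * (x - a)))| ≤
        2 * (‖q‖ * (b - a)) * (|P| + |Q|) / s := by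
  obtain ⟨P, Q, hPQ, hbound⟩ := hY.exists_abs_sub_trig_le hs
  refine ⟨P, Q, hPQ, fun x hx => (hbound x hx).trans ?_⟩
  have hlen := sub_nonneg.2 hab.out.le
  have hhalf : ‖q‖ * ‖Y‖ * (b - a) / s ≤ ‖Y‖ / 2 := by
    rw [div_le_div_iff₀ hs two_pos]
    nlinarith [norm_nonneg Y]
  have hself : ‖Y‖ ≤ |P| + |Q| + ‖Y‖ / 2 := norm_le_of_abs_extend_le fun x hx => by
    have htri := abs_sub_abs_le_abs_sub (extend Y x)
      (P * Real.cos (s * (x - a)) + Q * Real.sin (s * (x - a)))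
    linarith [hbound x hx, abs_mul_cos_add_mul_sin_le P Q (s * (x - a))]
  calc ‖q‖ * ‖Y‖ * (b - a) / s ≤ ‖q‖ * (2 * (|P| + |Q|)) * (b - a) / s := by
        gcongr
        linarith
    _ = 2 * (‖q‖ * (b - a)) * (|P| + |Q|) / s := by ring

theorem extend_shiftedSine (s θ : ℝ) {x : ℝ} (hx : x ∈ Icc a b) :
    extend (shiftedSine a b s θ) x = Real.sin (s * (x - a) + θ) :=
  extend_of_mem _ hx

theorem norm_shiftedSine_sub_le (s t θ : ℝ) :
    ‖shiftedSine a b s θ - shiftedSine a b t θ‖ ≤ |s - t| * (b - a) := by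
  refine (ContinuousMap.norm_le _ (mul_nonneg (abs_nonneg _) (sub_nonneg.2 hab.out.le))).2
    fun x => (Real.lipschitzWith_sin.norm_sub_le _ _).trans ?_
  rw [NNReal.coe_one, one_mul, add_sub_add_right_eq_sub, ← sub_mul, norm_mul, Real.norm_eq_abs,
    Real.norm_of_nonneg (sub_nonneg.2 x.2.1)]
  have hxb := x.2.2
  gcongr

theorem abs_integral_shiftedSine_le (hs : 0 < s) (θ : ℝ) {x : ℝ} (hx : x ∈ Icc a b) :
    |∫ t in a..x, extend (shiftedSine a b s θ) t| ≤ 2 / s := by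
  have heq : ∫ t in a..x, extend (shiftedSine a b s θ) t =
      ∫ t in a..x, Real.sin (s * t + (θ - s * a)) := by
    refine intervalIntegral.integral_congr fun t ht => ?_
    rw [uIcc_of_le hx.1] at ht
    rw [extend_shiftedSine s θ ⟨ht.1, ht.2.trans hx.2⟩]
    ring_nf
  rw [heq, intervalIntegral.integral_comp_mul_add _ hs.ne', integral_sin, smul_eq_mul, abs_mul,
    abs_of_pos (inv_pos.2 hs), ← div_eq_inv_mul]
  gcongr
  exact (abs_sub _ _).trans
    ((add_le_add (Real.abs_cos_le_one _) (Real.abs_cos_le_one _)).trans_eq one_add_one_eq_two)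

theorem abs_integral_le_of_norm_sub_shiftedSine_le (hs : 0 < s) {θ M : ℝ} {u : C(Icc a b, ℝ)}
    (hu : ‖u - shiftedSine a b s θ‖ ≤ M) {x : ℝ} (hx : x ∈ Icc a b) :
    |∫ t in a..x, extend u t| ≤ 2 / s + M * (b - a) := by
  have hsplit : ∫ t in a..x, extend u t = (∫ t in a..x, extend (shiftedSine a b s θ) t) +
      ∫ t in a..x, extend (u - shiftedSine a b s θ) t := by
    rw [← intervalIntegral.integral_add ((continuous_extend _).intervalIntegrable _ _)
      ((continuous_extend _).intervalIntegrable _ _)]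
    simp only [extend_sub, add_sub_cancel]
  have herror : |∫ t in a..x, extend (u - shiftedSine a b s θ) t| ≤ M * (b - a) := by
    rw [← Real.norm_eq_abs]
    refine (intervalIntegral.norm_integral_le_of_norm_le_const fun t _ =>
      (abs_extend_le_norm _ t).trans hu).trans ?_
    rw [abs_of_nonneg (sub_nonneg.2 hx.1)]
    exact mul_le_mul_of_nonneg_left (sub_le_sub_right hx.2 a) ((norm_nonneg _).trans hu)
  rw [hsplit]
  exact (abs_add_le _ _).trans (add_le_add (abs_integral_shiftedSine_le hs θ hx) herror)

theorem le_norm_toL2_shiftedSine_sq (hs : 0 < s) (θ : ℝ) :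
    (b - a) / 2 - 1 / s ≤ ‖toL2 (shiftedSine a b s θ)‖ ^ 2 := by
  have heq : ∫ t in a..b, extend (shiftedSine a b s θ) t ^ 2 =
      ∫ t in a..b, Real.sin (s * t + (θ - s * a)) ^ 2 := by
    refine intervalIntegral.integral_congr fun t ht => ?_
    rw [uIcc_of_le hab.out.le] at ht
    rw [extend_shiftedSine s θ ht]
    ring_nf
  rw [norm_toL2_sq, heq, intervalIntegral.integral_comp_mul_add (fun t => Real.sin t ^ 2) hs.ne',
    integral_sin_sq, smul_eq_mul]
  have hprod : ∀ t, |Real.sin t * Real.cos t| ≤ 1 := fun t => by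
    rw [abs_mul]
    exact mul_le_one₀ (Real.abs_sin_le_one t) (abs_nonneg _) (Real.abs_cos_le_one t)
  have ha := (abs_le.1 (hprod (s * a + (θ - s * a)))).1
  have hb := (abs_le.1 (hprod (s * b + (θ - s * a)))).2
  rw [inv_mul_eq_div, le_div_iff₀ hs, sub_mul, one_div_mul_cancel hs.ne']
  linarith

theorem exists_eventually_norm_sub_smul_shiftedSine_le (q : C(Icc a b, ℝ)) (α β : ℝ) :
    ∃ θ K : ℝ, 0 ≤ K ∧ ∀ᶠ s in atTop, ∀ Y, IsEigensolution q α β (s ^ 2) Y →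
      ∃ A : ℝ, ‖Y - A • shiftedSine a b s θ‖ ≤ K * |A| / s := by
  obtain ⟨θ, c, hc, hphase⟩ := exists_phase_abs_trig_sub_sin_le α
  have hlen := sub_nonneg.2 hab.out.le
  refine ⟨θ, 2 * (‖q‖ * (b - a)) * (1 + c) + c, by positivity, ?_⟩
  filter_upwards [eventually_ge_atTop 1, eventually_ge_atTop (2 * (‖q‖ * (b - a)))]
    with s hs hqs Y hY
  obtain ⟨P, Q, hPQ, hY⟩ := hY.exists_abs_sub_trig_le_of_le (by linarith) hqs
  obtain ⟨A, hA, htrig⟩ := hphase s hs P Q hPQ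
  refine ⟨A, norm_le_of_abs_extend_le fun x hx => ?_⟩
  rw [extend_sub, extend_smul, extend_shiftedSine s θ hx]
  calc |extend Y x - A * Real.sin (s * (x - a) + θ)|
      ≤ 2 * (‖q‖ * (b - a)) * (|P| + |Q|) / s + c * |A| / s :=
        (abs_sub_le _ _ _).trans (add_le_add (hY x hx) (htrig _))
    _ ≤ 2 * (‖q‖ * (b - a)) * ((1 + c) * |A|) / s + c * |A| / s := by gcongr
    _ = (2 * (‖q‖ * (b - a)) * (1 + c) + c) * |A| / s := by ring

theorem exists_eventually_norm_smul_sub_shiftedSine_le (q : C(Icc a b, ℝ)) (α β : ℝ) :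
    ∃ θ K : ℝ, 0 ≤ K ∧ ∀ᶠ s in atTop, ∀ Y, Y ≠ 0 → IsEigensolution q α β (s ^ 2) Y →
      ∃ A : ℝ, ‖A • Y - shiftedSine a b s θ‖ ≤ K / s := by
  obtain ⟨θ, K, hK, hlim⟩ := exists_eventually_norm_sub_smul_shiftedSine_le q α β
  refine ⟨θ, K, hK, hlim.mono fun s hs Y hY0 hY => ?_⟩
  obtain ⟨A, hA⟩ := hs Y hY
  have hA0 : A ≠ 0 := by
    rintro rfl
    exact hY0 (by simpa using hA)
  refine ⟨A⁻¹, ?_⟩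
  rw [← inv_smul_smul₀ hA0 (shiftedSine a b s θ), ← smul_sub, norm_smul, norm_inv,
    Real.norm_eq_abs, inv_mul_le_iff₀ (abs_pos.2 hA0)]
  exact hA.trans_eq (by ring)

theorem exists_pos_eventually_le_norm_toL2_smul (q : C(Icc a b, ℝ)) (α β : ℝ) :
    ∃ θ K c : ℝ, 0 ≤ K ∧ 0 < c ∧ ∀ᶠ s in atTop, ∀ Y, Y ≠ 0 → IsEigensolution q α β (s ^ 2) Y →
      ∃ A : ℝ, ‖A • Y - shiftedSine a b s θ‖ ≤ K / s ∧ c ≤ ‖toL2 (A • Y)‖ := by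
  obtain ⟨θ, K, hK, hmodel⟩ := exists_eventually_norm_smul_sub_shiftedSine_le q α β
  have hlen := sub_pos.2 hab.out
  have hinv : ∀ r : ℝ, Tendsto (fun s => r / s) atTop (𝓝 0) := fun r =>
    tendsto_const_nhds.div_atTop tendsto_id
  have hc : 0 < √((b - a) / 4) := by positivity
  refine ⟨θ, K, √((b - a) / 4) / 2, hK, by positivity, ?_⟩
  filter_upwards [hmodel, eventually_gt_atTop 0,
    (hinv 1).eventually_lt_const (show 0 < (b - a) / 4 by positivity),
    (hinv (‖toL2 (a := a) (b := b)‖ * K)).eventually_lt_const (half_pos hc)]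
    with s hs hs0 hs1 hsK Y hY0 hY
  obtain ⟨A, hA⟩ := hs Y hY0 hY
  refine ⟨A, hA, ?_⟩
  have hsine : √((b - a) / 4) ≤ ‖toL2 (shiftedSine a b s θ)‖ :=
    Real.sqrt_le_iff.2 ⟨norm_nonneg _, by
      linarith [le_norm_toL2_shiftedSine_sq (a := a) (b := b) hs0 θ]⟩
  have herror : ‖toL2 (A • Y - shiftedSine a b s θ)‖ ≤ ‖toL2 (a := a) (b := b)‖ * K / s := by
    rw [mul_div_assoc]
    exact (toL2.le_opNorm _).trans (mul_le_mul_of_nonneg_left hA (norm_nonneg _))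
  rw [map_sub] at herror
  linarith [norm_sub_norm_le (toL2 (shiftedSine a b s θ)) (toL2 (A • Y)),
    norm_sub_rev (toL2 (A • Y)) (toL2 (shiftedSine a b s θ))]

theorem exists_eventually_norm_le_and_abs_integral_le (q : C(Icc a b, ℝ)) (α β : ℝ) :
    ∃ C : ℝ, ∀ᶠ s in atTop, ∀ Y, IsEigensolution q α β (s ^ 2) Y → ‖toL2 Y‖ = 1 →
      ‖Y‖ ≤ C ∧ ∀ x ∈ Icc a b, |∫ t in a..x, extend Y t| ≤ C / s := by
  obtain ⟨θ, K, c, hK, hc, hmodel⟩ := exists_pos_eventually_le_norm_toL2_smul q α β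
  have hlen := sub_nonneg.2 hab.out.le
  refine ⟨(2 + K * (1 + (b - a))) / c, ?_⟩
  filter_upwards [hmodel, eventually_ge_atTop 1] with s hs hs1 Y hY hnorm
  have hs0 : 0 < s := by linarith
  obtain ⟨A, hA, hcA⟩ := hs Y (by rintro rfl; simp at hnorm) hY
  rw [map_smul, norm_smul, hnorm, mul_one, Real.norm_eq_abs] at hcA
  have hle : ∀ {r M : ℝ}, 0 ≤ r → |A| * r ≤ M → r ≤ M / c := fun hr hM => by
    rw [le_div_iff₀' hc]
    exact (mul_le_mul_of_nonneg_right hcA hr).trans hM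
  refine ⟨hle (norm_nonneg _) ?_, fun x hx => ?_⟩
  · have hKs : K / s ≤ K := div_le_self hK hs1
    rw [← Real.norm_eq_abs, ← norm_smul]
    nlinarith [norm_le_norm_add_norm_sub' (A • Y) (shiftedSine a b s θ),
      norm_shiftedSine_le (a := a) (b := b) s θ]
  · rw [div_right_comm]
    refine hle (abs_nonneg _) ?_
    rw [← abs_mul, ← intervalIntegral.integral_const_mul]
    refine (abs_integral_le_of_norm_sub_shiftedSine_le hs0 hA hx).trans ?_
    rw [← sub_nonneg]
    calc 0 ≤ K / s := by positivity
      _ = _ := by ring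

theorem norm_le_norm_sub_of_inner_eq_zero {H : Type*} [NormedAddCommGroup H]
    [InnerProductSpace ℝ H] {u v : H} (h : ⟪u, v⟫_ℝ = 0) : ‖u‖ ≤ ‖u - v‖ := by
  refine (mul_self_le_mul_self_iff (norm_nonneg _) (norm_nonneg _)).2 ?_
  rw [norm_sub_sq_eq_norm_sq_add_norm_sq_real h]
  exact le_add_of_nonneg_right (mul_self_nonneg _)

theorem exists_pos_eventually_le_sub (q : C(Icc a b, ℝ)) (α β : ℝ) :
    ∃ δ > 0, ∀ᶠ s in atTop, ∀ t ≥ s, ∀ Y Z, Y ≠ 0 → Z ≠ 0 → IsEigensolution q α β (s ^ 2) Y →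
      IsEigensolution q α β (t ^ 2) Z → ⟪toL2 Y, toL2 Z⟫_ℝ = 0 → δ ≤ t - s := by
  obtain ⟨θ, K, c, hK, hc, hmodel⟩ := exists_pos_eventually_le_norm_toL2_smul q α β
  set L := ‖toL2 (a := a) (b := b)‖
  have hlen := sub_pos.2 hab.out
  refine ⟨c / (2 * (L + 1) * (b - a)), by positivity, ?_⟩
  have hinv : Tendsto (fun s => L * (2 * K) / s) atTop (𝓝 0) :=
    tendsto_const_nhds.div_atTop tendsto_id
  filter_upwards [eventually_forall_ge_atTop.2 hmodel, eventually_gt_atTop 0,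
    hinv.eventually_lt_const (half_pos hc)] with s hs hs0 hsK t hst Y Z hY0 hZ0 hY hZ horth
  obtain ⟨A, hA, hcA⟩ := hs s le_rfl Y hY0 hY
  obtain ⟨B, hB, -⟩ := hs t hst Z hZ0 hZ
  have hdist : ‖A • Y - B • Z‖ ≤ K / s + (t - s) * (b - a) + K / t := by
    calc ‖A • Y - B • Z‖ = ‖(A • Y - shiftedSine a b s θ) +
          (shiftedSine a b s θ - shiftedSine a b t θ) - (B • Z - shiftedSine a b t θ)‖ := by
          congr 1
          abel
      _ ≤ _ := (norm_sub_le _ _).trans (add_le_add ((norm_add_le _ _).trans (add_le_add hA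
        ((norm_shiftedSine_sub_le s t θ).trans_eq (by
          rw [abs_sub_comm, abs_of_nonneg (sub_nonneg.2 hst)])))) hB)
  have hpythagoras : ‖toL2 (A • Y)‖ ≤ ‖toL2 (A • Y - B • Z)‖ := by
    rw [map_sub]
    refine norm_le_norm_sub_of_inner_eq_zero ?_
    rw [map_smul, map_smul, real_inner_smul_left, real_inner_smul_right, horth, mul_zero, mul_zero]
  have hKt : K / t ≤ K / s := by gcongr
  have hfar : c / 2 ≤ L * ((t - s) * (b - a)) := by
    have hL := hcA.trans (hpythagoras.trans (toL2.le_opNorm _))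
    have hmono := mul_le_mul_of_nonneg_left hdist (norm_nonneg (toL2 (a := a) (b := b)))
    rw [mul_div_assoc, mul_div_assoc] at hsK
    nlinarith [norm_nonneg (toL2 (a := a) (b := b))]
  rw [div_le_iff₀ (by positivity)]
  nlinarith [mul_nonneg (sub_nonneg.2 hst) hlen.le]

end Asymptotics

/-! ### Karamata's polynomial approximation of the cutoff -/
section Karamata

/-- The multiplier `1_{u > 1/2}` that cuts an eigenfunction expansion off at frequency `κ`,
as a function of `u = κ² / (λ + κ²)`. -/
noncomputable def cutoff (u : ℝ) : ℝ := if 1 / 2 < u then 1 else 0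

/-- The error allowed in the polynomial approximation of `cutoff`: small relative to the distance
to the endpoints `0` and `1`, except for an error `1` in a window of radius `τ` around the jump. -/
noncomputable def cutoffError (τ u : ℝ) : ℝ := τ * (u * (1 - u)) + if |u - 1 / 2| < τ then 1 else 0

theorem cutoff_div_add {x y : ℝ} (h : 0 < x + y) :
    cutoff (y / (x + y)) = if x < y then 1 else 0 := by
  refine if_congr ?_ rfl rfl
  rw [div_lt_div_iff₀ two_pos h]
  constructor <;> intro hlt <;> linarith

theorem exists_polynomial_abs_sub_eval_le {g : ℝ → ℝ} (hg : ContinuousOn g (Icc 0 1)) {τ : ℝ}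
    (hτ : 0 < τ) : ∃ p : Polynomial ℝ, p.eval 1 = 1 ∧
      ∀ u ∈ Icc (0 : ℝ) 1, |u + u * (1 - u) * g u - p.eval u| ≤ τ * (u * (1 - u)) := by
  obtain ⟨r, hr⟩ := exists_polynomial_near_of_continuousOn 0 1 g hg τ hτ
  refine ⟨.X + .X * (1 - .X) * r, by simp, fun u hu => ?_⟩
  have hnonneg : 0 ≤ u * (1 - u) := mul_nonneg hu.1 (sub_nonneg.2 hu.2)
  calc |u + u * (1 - u) * g u - (Polynomial.X + Polynomial.X * (1 - Polynomial.X) * r).eval u|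
      = |r.eval u - g u| * (u * (1 - u)) := by
        rw [← abs_of_nonneg hnonneg, ← abs_mul, abs_of_nonneg hnonneg, ← abs_neg]
        congr 1
        simp only [Polynomial.eval_add, Polynomial.eval_mul, Polynomial.eval_sub,
          Polynomial.eval_X, Polynomial.eval_one]
        ring
    _ ≤ τ * (u * (1 - u)) := by gcongr; exact (hr u hu).le

/-- The piecewise linear function that rises from `0` to `1` on `[1/2 - τ, 1/2 + τ]`. -/
noncomputable def ramp (τ u : ℝ) : ℝ := max 0 (min 1 ((u - 1 / 2 + τ) / (2 * τ)))

theorem continuous_ramp (τ : ℝ) : Continuous (ramp τ) := by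
  unfold ramp
  fun_prop

theorem ramp_eq_zero {τ u : ℝ} (hτ : 0 < τ) (hu : u ≤ 1 / 2 - τ) : ramp τ u = 0 :=
  max_eq_left ((min_le_right _ _).trans
    (div_nonpos_of_nonpos_of_nonneg (by linarith) (by positivity)))

theorem ramp_eq_one {τ u : ℝ} (hτ : 0 < τ) (hu : 1 / 2 + τ ≤ u) : ramp τ u = 1 := by
  have hone : 1 ≤ (u - 1 / 2 + τ) / (2 * τ) := (one_le_div (by positivity)).2 (by linarith)
  rw [ramp, min_eq_left hone, max_eq_right zero_le_one]

theorem abs_cutoff_sub_ramp_le {τ : ℝ} (hτ : 0 < τ) (u : ℝ) :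
    |cutoff u - ramp τ u| ≤ if |u - 1 / 2| < τ then 1 else 0 := by
  by_cases hwindow : |u - 1 / 2| < τ
  · have hnonneg : 0 ≤ ramp τ u := le_max_left _ _
    have hle_one : ramp τ u ≤ 1 := max_le zero_le_one (min_le_left _ _)
    rw [if_pos hwindow, cutoff, abs_le]
    split_ifs <;> constructor <;> linarith
  · rw [if_neg hwindow, cutoff]
    rcases le_abs.1 (not_lt.1 hwindow) with hu | hu
    · rw [ramp_eq_one hτ (by linarith), if_pos (by linarith), sub_self, abs_zero]
    · rw [ramp_eq_zero hτ (by linarith), if_neg (by linarith), sub_self, abs_zero]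

theorem exists_continuous_ramp_eq {τ : ℝ} (hτ : 0 < τ) (hτ' : τ ≤ 1 / 4) :
    ∃ g : ℝ → ℝ, Continuous g ∧ ∀ u, ramp τ u = u + u * (1 - u) * g u := by
  have hmax : ∀ v : ℝ, max v (1 / 4) ≠ 0 := fun v => by positivity
  -- `ramp τ` vanishes near `0` and equals `1` near `1`, so `(ramp τ u - u) / (u * (1 - u))`
  -- extends continuously; its partial fractions are `ramp τ u / u` and `(1 - ramp τ u) / (1 - u)`.
  refine ⟨fun u => ramp τ u / max u (1 / 4) - (1 - ramp τ u) / max (1 - u) (1 / 4),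
    ((continuous_ramp τ).div (by fun_prop) fun u => hmax u).sub
      ((continuous_const.sub (continuous_ramp τ)).div (by fun_prop) fun u => hmax (1 - u)),
    fun u => ?_⟩
  have hzero : u * (ramp τ u / max u (1 / 4)) = ramp τ u := by
    rcases le_total u (1 / 2 - τ) with hu | hu
    · rw [ramp_eq_zero hτ hu, zero_div, mul_zero]
    · rw [max_eq_left (by linarith), mul_div_cancel₀ _ (by linarith : u ≠ 0)]
  have hone : (1 - u) * ((1 - ramp τ u) / max (1 - u) (1 / 4)) = 1 - ramp τ u := by
    rcases le_total (1 / 2 + τ) u with hu | hu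
    · rw [ramp_eq_one hτ hu, sub_self, zero_div, mul_zero]
    · rw [max_eq_left (by linarith), mul_div_cancel₀ _ (by linarith : 1 - u ≠ 0)]
  linear_combination u * hone - (1 - u) * hzero

theorem exists_polynomial_abs_cutoff_sub_eval_le {τ : ℝ} (hτ : 0 < τ) (hτ' : τ ≤ 1 / 4) :
    ∃ p : Polynomial ℝ, p.eval 1 = 1 ∧
      ∀ u ∈ Icc (0 : ℝ) 1, |cutoff u - p.eval u| ≤ cutoffError τ u := by
  obtain ⟨g, hg, hramp⟩ := exists_continuous_ramp_eq hτ hτ'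
  obtain ⟨p, hp1, hp⟩ := exists_polynomial_abs_sub_eval_le hg.continuousOn hτ
  refine ⟨p, hp1, fun u hu => ?_⟩
  have hp' := hp u hu
  rw [← hramp] at hp'
  rw [cutoffError, add_comm]
  exact (abs_sub_le _ (ramp τ u) _).trans (add_le_add (abs_cutoff_sub_ramp_le hτ u) hp')

end Karamata

/-! ### Sums over separated frequencies -/
section SeparatedSums

theorem sum_range_one_div_sq_le {κ δ : ℝ} (hκ : 0 < κ) (hδ : 0 < δ) (m : ℕ) :
    ∑ j ∈ Finset.range m, 1 / (κ + δ * j) ^ 2 ≤ 1 / κ ^ 2 + 1 / (δ * κ) := by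
  have htelescope : ∀ j : ℕ, 1 / (κ + δ * (j + 1 : ℕ)) ^ 2 ≤
      1 / (δ * (κ + δ * j)) - 1 / (δ * (κ + δ * (j + 1 : ℕ))) := fun j => by
    have hpos : 0 < κ + δ * j := by positivity
    have hdiff : 1 / (δ * (κ + δ * j)) - 1 / (δ * (κ + δ * j + δ)) =
        1 / ((κ + δ * j) * (κ + δ * j + δ)) := by field_simp; ring
    rw [show κ + δ * (j + 1 : ℕ) = κ + δ * j + δ by push_cast; ring, hdiff]
    exact one_div_le_one_div_of_le (by positivity) (by nlinarith)
  have hsucc : ∑ j ∈ Finset.range m, 1 / (κ + δ * (j + 1 : ℕ)) ^ 2 ≤ 1 / (δ * κ) := by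
    have htail : 0 ≤ 1 / (δ * (κ + δ * m)) := by positivity
    have hsum := (Finset.sum_le_sum fun j (_ : j ∈ Finset.range m) => htelescope j).trans_eq
      (Finset.sum_range_sub' (fun j : ℕ => 1 / (δ * (κ + δ * j))) m)
    simp only [Nat.cast_zero, mul_zero, add_zero] at hsum
    linarith
  calc ∑ j ∈ Finset.range m, 1 / (κ + δ * j) ^ 2
      ≤ ∑ j ∈ Finset.range (m + 1), 1 / (κ + δ * j) ^ 2 :=
        Finset.sum_le_sum_of_subset_of_nonneg (Finset.range_mono m.le_succ)
          fun _ _ _ => by positivity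
    _ ≤ 1 / κ ^ 2 + 1 / (δ * κ) := by
        rw [Finset.sum_range_succ', Nat.cast_zero, mul_zero, add_zero, add_comm]
        gcongr

variable {σ : ℕ → ℝ} {δ κ τ : ℝ}

theorem add_mul_le_of_forall_add_le (hgap : ∀ j, σ j + δ ≤ σ (j + 1)) (m k : ℕ) :
    σ m + δ * k ≤ σ (m + k) := by
  induction k with
  | zero => simp
  | succ k ih =>
    rw [← add_assoc, Nat.cast_succ]
    linarith [hgap (m + k)]

theorem card_le_of_forall_abs_sub_le {r : ℝ} (hδ : 0 < δ) (hr : 0 ≤ r)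
    (hgap : ∀ j, σ j + δ ≤ σ (j + 1)) {F : Finset ℕ} (hF : ∀ j ∈ F, |σ j - κ| ≤ r) :
    (F.card : ℝ) ≤ 2 * r / δ + 1 := by
  rcases F.eq_empty_or_nonempty with rfl | hne
  · rw [Finset.card_empty, Nat.cast_zero]
    positivity
  have hle : F.min' hne ≤ F.max' hne := F.min'_le _ (F.max'_mem hne)
  have hcard : F.card ≤ F.max' hne - F.min' hne + 1 := by
    have hsub : F ⊆ Finset.Icc (F.min' hne) (F.max' hne) := fun j hj =>
      Finset.mem_Icc.2 ⟨F.min'_le _ hj, F.le_max' _ hj⟩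
    have := Finset.card_le_card hsub
    rw [Nat.card_Icc] at this
    omega
  have hspread := add_mul_le_of_forall_add_le hgap (F.min' hne) (F.max' hne - F.min' hne)
  rw [Nat.add_sub_cancel' hle] at hspread
  have hmin := abs_le.1 (hF _ (F.min'_mem hne))
  have hmax := abs_le.1 (hF _ (F.max'_mem hne))
  calc (F.card : ℝ) ≤ (F.max' hne - F.min' hne : ℕ) + 1 := by exact_mod_cast hcard
    _ ≤ 2 * r / δ + 1 := by
        gcongr
        rw [le_div_iff₀ hδ]
        linarith

theorem sum_range_mul_one_sub_div_le (hδ : 0 < δ) (hκ : 0 < κ) (h0 : 0 < σ 0)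
    (hgap : ∀ j, σ j + δ ≤ σ (j + 1)) (m : ℕ) :
    ∑ j ∈ Finset.range m, κ ^ 2 / (σ j ^ 2 + κ ^ 2) * (1 - κ ^ 2 / (σ j ^ 2 + κ ^ 2)) / σ j ≤
      1 / κ + 1 / δ := by
  have hterm : ∀ j, κ ^ 2 / (σ j ^ 2 + κ ^ 2) * (1 - κ ^ 2 / (σ j ^ 2 + κ ^ 2)) / σ j ≤
      κ * (1 / (κ + δ * j) ^ 2) := fun j => by
    have hlow := add_mul_le_of_forall_add_le hgap 0 j
    rw [zero_add] at hlow
    have hpos : 0 < σ j := lt_of_lt_of_le (by positivity) hlow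
    calc κ ^ 2 / (σ j ^ 2 + κ ^ 2) * (1 - κ ^ 2 / (σ j ^ 2 + κ ^ 2)) / σ j
        = κ * (σ j * κ / (σ j ^ 2 + κ ^ 2) ^ 2) := by field_simp; ring
      _ ≤ κ * (1 / (κ + σ j) ^ 2) := by
          gcongr ?_ * ?_
          rw [div_le_div_iff₀ (by positivity) (by positivity)]
          nlinarith [mul_pos hpos hκ, sq_nonneg (σ j - κ),
            sq_nonneg (σ j ^ 2 + κ ^ 2 - 2 * (σ j * κ))]
      _ ≤ κ * (1 / (κ + δ * j) ^ 2) := by gcongr; linarith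
  calc _ ≤ ∑ j ∈ Finset.range m, κ * (1 / (κ + δ * j) ^ 2) :=
        Finset.sum_le_sum fun j _ => hterm j
    _ ≤ κ * (1 / κ ^ 2 + 1 / (δ * κ)) := by
        rw [← Finset.mul_sum]
        gcongr
        exact sum_range_one_div_sq_le hκ hδ m
    _ = 1 / κ + 1 / δ := by field_simp

theorem abs_sub_le_and_le_of_abs_div_sub_half_lt {s : ℝ} (hs : 0 < s) (hκ : 0 < κ) (hτ : 0 < τ)
    (hτ' : τ ≤ 1 / 4) (h : |κ ^ 2 / (s ^ 2 + κ ^ 2) - 1 / 2| < τ) :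
    |s - κ| ≤ 8 * τ * κ ∧ κ ≤ 3 * s := by
  have hfactor : κ ^ 2 / (s ^ 2 + κ ^ 2) - 1 / 2 = (κ - s) * (κ + s) / (2 * (s ^ 2 + κ ^ 2)) := by
    field_simp
    ring
  rw [hfactor, abs_div, abs_mul, abs_of_pos (by positivity : 0 < κ + s),
    abs_of_pos (by positivity : 0 < 2 * (s ^ 2 + κ ^ 2)), div_lt_iff₀ (by positivity)] at h
  have hdiff : |κ - s| ≤ 2 * τ * (κ + s) := by
    refine le_of_mul_le_mul_right (h.le.trans ?_) (by positivity : 0 < κ + s)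
    nlinarith [mul_pos hτ (mul_pos hs hκ)]
  have hhalf := abs_le.1 (hdiff.trans (by nlinarith : _ ≤ (κ + s) / 2))
  refine ⟨?_, by linarith⟩
  rw [abs_sub_comm]
  nlinarith

theorem sum_range_ite_div_le (hδ : 0 < δ) (hκ : 0 < κ) (hτ : 0 < τ) (hτ' : τ ≤ 1 / 4)
    (h0 : ∀ j, 0 < σ j) (hgap : ∀ j, σ j + δ ≤ σ (j + 1)) (m : ℕ) :
    ∑ j ∈ Finset.range m,
      (if |κ ^ 2 / (σ j ^ 2 + κ ^ 2) - 1 / 2| < τ then 1 else 0) / σ j ≤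
        48 * τ / δ + 3 / κ := by
  set W := (Finset.range m).filter fun j => |κ ^ 2 / (σ j ^ 2 + κ ^ 2) - 1 / 2| < τ
  have hwindow : ∀ j ∈ W, |σ j - κ| ≤ 8 * τ * κ ∧ κ ≤ 3 * σ j := fun j hj =>
    abs_sub_le_and_le_of_abs_div_sub_half_lt (h0 j) hκ hτ hτ' (Finset.mem_filter.1 hj).2
  have hcard : (W.card : ℝ) ≤ 2 * (8 * τ * κ) / δ + 1 :=
    card_le_of_forall_abs_sub_le hδ (by positivity) hgap fun j hj => (hwindow j hj).1
  simp only [ite_div, zero_div]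
  rw [← Finset.sum_filter]
  calc ∑ j ∈ W, 1 / σ j ≤ W.card • (3 / κ) := Finset.sum_le_card_nsmul _ _ _ fun j hj => by
        rw [div_le_div_iff₀ (h0 j) hκ, one_mul]
        exact (hwindow j hj).2
    _ ≤ (2 * (8 * τ * κ) / δ + 1) * (3 / κ) := by rw [nsmul_eq_mul]; gcongr
    _ = 48 * τ / δ + 3 / κ := by field_simp; ring

theorem sum_range_cutoffError_div_le (hδ : 0 < δ) (hτ : 0 < τ) (hτ' : τ ≤ 1 / 4)
    (hκ : δ ≤ τ * κ) (h0 : ∀ j, 0 < σ j) (hgap : ∀ j, σ j + δ ≤ σ (j + 1)) (m : ℕ) :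
    ∑ j ∈ Finset.range m, cutoffError τ (κ ^ 2 / (σ j ^ 2 + κ ^ 2)) / σ j ≤ 53 * τ / δ := by
  have hκ0 : 0 < κ := pos_of_mul_pos_right (hδ.trans_le hκ) hτ.le
  have hinv : 1 / κ ≤ τ / δ := by
    rw [div_le_div_iff₀ hκ0 hδ]
    linarith
  simp only [cutoffError, add_div, mul_div_assoc τ, Finset.sum_add_distrib, ← Finset.mul_sum]
  calc _ ≤ τ * (1 / κ + 1 / δ) + (48 * τ / δ + 3 / κ) := by
        gcongr
        · exact sum_range_mul_one_sub_div_le hδ hκ0 (h0 0) hgap m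
        · exact sum_range_ite_div_le hδ hκ0 hτ hτ' h0 hgap m
    _ = τ * (1 / κ) + 3 * (1 / κ) + 49 * (τ / δ) := by ring
    _ ≤ 1 * (τ / δ) + 3 * (τ / δ) + 49 * (τ / δ) := by gcongr; linarith
    _ = 53 * τ / δ := by ring

end SeparatedSums

/-! ### The Tauberian estimate -/
section Tauberian

theorem tendsto_sq_div_add_sq (l : ℝ) :
    Tendsto (fun κ : ℝ => κ ^ 2 / (l + κ ^ 2)) atTop (𝓝 1) := by
  have hden : Tendsto (fun κ : ℝ => l + κ ^ 2) atTop atTop :=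
    tendsto_atTop_add_const_left _ _ (tendsto_pow_atTop two_ne_zero)
  have hlim : Tendsto (fun κ : ℝ => 1 - l / (l + κ ^ 2)) atTop (𝓝 (1 - 0)) :=
    (tendsto_const_nhds.div_atTop hden).const_sub 1
  rw [sub_zero] at hlim
  refine hlim.congr' ?_
  filter_upwards [hden.eventually_gt_atTop 0] with κ hκ
  field_simp
  ring

theorem tendsto_abs_cutoff_sub_eval {p : Polynomial ℝ} (hp : p.eval 1 = 1) :
    Tendsto (fun u => |cutoff u - p.eval u|) (𝓝 1) (𝓝 0) := by
  have hcont : Tendsto (fun u => |1 - p.eval u|) (𝓝 1) (𝓝 |1 - p.eval 1|) :=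
    (continuous_const.sub p.continuous).abs.tendsto 1
  rw [hp, sub_self, abs_zero] at hcont
  refine hcont.congr' ?_
  filter_upwards [lt_mem_nhds (by norm_num : (1 / 2 : ℝ) < 1)] with u hu
  rw [cutoff, if_pos hu]

theorem sum_range_abs_cutoff_sub_eval_mul_le {lam w : ℕ → ℝ} {C δ τ κ : ℝ} {p : Polynomial ℝ}
    (hp : ∀ u ∈ Icc (0 : ℝ) 1, |cutoff u - p.eval u| ≤ cutoffError τ u)
    (hC : 0 ≤ C) (hδ : 0 < δ) (hτ : 0 < τ) (hτ' : τ ≤ 1 / 4) (hκ : δ ≤ τ * κ)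
    (hlam : ∀ n, 0 < lam n) (hgap : ∀ n, √(lam n) + δ ≤ √(lam (n + 1)))
    (hw0 : ∀ n, 0 ≤ w n) (hw : ∀ n, w n ≤ C / √(lam n)) (m : ℕ) :
    ∑ n ∈ Finset.range m, |cutoff (κ ^ 2 / (lam n + κ ^ 2)) - p.eval (κ ^ 2 / (lam n + κ ^ 2))| *
      w n ≤ C * (53 * τ / δ) := by
  refine le_trans ?_ (mul_le_mul_of_nonneg_left (sum_range_cutoffError_div_le hδ hτ hτ' hκ
    (fun n => Real.sqrt_pos.2 (hlam n)) hgap m) hC)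
  rw [Finset.mul_sum]
  refine Finset.sum_le_sum fun n _ => ?_
  rw [Real.sq_sqrt (hlam n).le, mul_div_left_comm]
  have hmem : κ ^ 2 / (lam n + κ ^ 2) ∈ Icc (0 : ℝ) 1 := by
    have := hlam n
    exact ⟨by positivity, div_le_one_of_le₀ (by linarith) (by positivity)⟩
  exact mul_le_mul (hp _ hmem) (hw n) (hw0 n) ((abs_nonneg _).trans (hp _ hmem))

theorem exists_polynomial_eventually_sum_range_le {lam w : ℕ → ℝ} {C δ ε : ℝ}
    (hlam : Tendsto lam atTop atTop) (hδ : 0 < δ)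
    (hgap : ∀ᶠ n in atTop, √(lam n) + δ ≤ √(lam (n + 1)))
    (hw0 : ∀ n, 0 ≤ w n) (hw : ∀ᶠ n in atTop, w n ≤ C / √(lam n)) (hC : 0 < C) (hε : 0 < ε) :
    ∃ p : Polynomial ℝ, p.eval 1 = 1 ∧ ∀ᶠ κ in atTop, ∀ m, ∑ n ∈ Finset.range m,
      |cutoff (κ ^ 2 / (lam n + κ ^ 2)) - p.eval (κ ^ 2 / (lam n + κ ^ 2))| * w n ≤ ε := by
  obtain ⟨n₀, hn₀⟩ :=
    (hgap.and (hw.and (hlam.eventually_gt_atTop 0))).exists_forall_of_atTop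
  obtain ⟨τ, hτ, hτ', hτε⟩ : ∃ τ > 0, τ ≤ 1 / 4 ∧ C * (53 * τ / δ) ≤ ε / 2 := by
    refine ⟨min (1 / 4) (ε * δ / (106 * C)), by positivity, min_le_left _ _, ?_⟩
    calc C * (53 * min (1 / 4) (ε * δ / (106 * C)) / δ)
        ≤ C * (53 * (ε * δ / (106 * C)) / δ) := by gcongr; exact min_le_right _ _
      _ = ε / 2 := by field_simp; norm_num
  obtain ⟨p, hp1, hp⟩ := exists_polynomial_abs_cutoff_sub_eval_le hτ hτ'
  have hhead : Tendsto (fun κ : ℝ => ∑ n ∈ Finset.range n₀,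
      |cutoff (κ ^ 2 / (lam n + κ ^ 2)) - p.eval (κ ^ 2 / (lam n + κ ^ 2))| * w n)
      atTop (𝓝 0) := by
    rw [← Finset.sum_const_zero (s := Finset.range n₀)]
    refine tendsto_finsetSum _ fun n _ => ?_
    simpa only [zero_mul, Function.comp_apply] using
      ((tendsto_abs_cutoff_sub_eval hp1).comp (tendsto_sq_div_add_sq (lam n))).mul_const (w n)
  refine ⟨p, hp1, ?_⟩
  filter_upwards [hhead.eventually (gt_mem_nhds (half_pos hε)), eventually_ge_atTop (δ / τ)]
    with κ hheadκ hκ m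
  have htail := sum_range_abs_cutoff_sub_eval_mul_le (lam := fun j => lam (n₀ + j))
    (w := fun j => w (n₀ + j)) hp hC.le hδ hτ hτ' ((div_le_iff₀' hτ).1 hκ)
    (fun j => (hn₀ _ (by omega)).2.2) (fun j => (hn₀ _ (by omega)).1)
    (fun j => hw0 _) (fun j => (hn₀ _ (by omega)).2.1) m
  refine (Finset.sum_le_sum_of_subset_of_nonneg (Finset.range_mono (Nat.le_add_left m n₀))
    fun n _ _ => mul_nonneg (abs_nonneg _) (hw0 n)).trans ?_
  rw [Finset.sum_range_add]
  linarith

end Tauberian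

/-! ### Convergence of the eigenfunction expansion -/
section Expansion

variable {a b : ℝ} [hab : Fact (a < b)]

/-- The partial sum `∑ n < N, ⟨f, Y n⟩ Y n` of the eigenfunction expansion of `f`. -/
noncomputable def partialSum (Y : ℕ → C(Icc a b, ℝ)) (f : C(Icc a b, ℝ)) (N : ℕ) : C(Icc a b, ℝ) :=
  ∑ n ∈ Finset.range N, ⟪toL2 f, toL2 (Y n)⟫_ℝ • Y n

theorem extend_partialSum (Y : ℕ → C(Icc a b, ℝ)) (f : C(Icc a b, ℝ)) (N : ℕ) {x : ℝ}
    (hx : x ∈ Icc a b) : extend (partialSum Y f N) x =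
      ∑ n ∈ Finset.range N, ⟪toL2 f, toL2 (Y n)⟫_ℝ * extend (Y n) x := by
  simp only [extend_of_mem _ hx, partialSum, ContinuousMap.sum_apply, ContinuousMap.smul_apply,
    smul_eq_mul]

namespace IsEigensystem

variable {q f : C(Icc a b, ℝ)} {α β : ℝ} {lam : ℕ → ℝ} {Y : ℕ → C(Icc a b, ℝ)}
  (hS : IsEigensystem q α β lam Y)
include hS

theorem inner_toL2_eq_ite (n m : ℕ) : ⟪toL2 (Y n), toL2 (Y m)⟫_ℝ = if n = m then 1 else 0 :=
  orthonormal_iff_ite.1 hS.orthonormal n m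

theorem inner_toL2_partialSum (N m : ℕ) : ⟪toL2 (partialSum Y f N), toL2 (Y m)⟫_ℝ =
    (if m < N then 1 else 0) * ⟪toL2 f, toL2 (Y m)⟫_ℝ := by
  simp only [partialSum, map_sum, map_smul, sum_inner, real_inner_smul_left, hS.inner_toL2_eq_ite,
    mul_ite, mul_one, mul_zero, Finset.sum_ite_eq', Finset.mem_range, ite_mul, one_mul, zero_mul]

theorem tendsto_sqrt : Tendsto (fun n => √(lam n)) atTop atTop :=
  Real.tendsto_sqrt_atTop.comp hS.tendsto_atTop

theorem norm_le_of_sum_range_le {g : C(Icc a b, ℝ)} {B : ℝ}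
    (hB : ∀ m, ∑ n ∈ Finset.range m, |⟪toL2 g, toL2 (Y n)⟫_ℝ| * ‖Y n‖ ≤ B) : ‖g‖ ≤ B := by
  have hnorm : ∀ n, ‖⟪toL2 g, toL2 (Y n)⟫_ℝ • Y n‖ = |⟪toL2 g, toL2 (Y n)⟫_ℝ| * ‖Y n‖ :=
    fun n => by rw [norm_smul, Real.norm_eq_abs]
  simp only [← hnorm] at hB
  have hsum := summable_of_sum_range_le (fun _ => norm_nonneg _) hB
  have hseries : g = ∑' n, ⟪toL2 g, toL2 (Y n)⟫_ℝ • Y n := by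
    refine sub_eq_zero.1 (hS.eq_zero_of_forall_inner_eq_zero fun m => ?_)
    have hcoeff : HasSum (fun n => if n = m then ⟪toL2 g, toL2 (Y m)⟫_ℝ else 0)
        ⟪toL2 (Y m), toL2 (∑' n, ⟪toL2 g, toL2 (Y n)⟫_ℝ • Y n)⟫_ℝ := by
      refine ((innerSL ℝ (toL2 (Y m)) ∘L toL2).hasSum hsum.of_norm.hasSum).congr_fun fun n => ?_
      rw [ContinuousLinearMap.comp_apply, map_smul, innerSL_apply_apply, real_inner_smul_right,
        hS.inner_toL2_eq_ite, mul_ite, mul_one, mul_zero]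
      rcases eq_or_ne n m with rfl | hne
      · rw [if_pos rfl]
      · rw [if_neg hne, if_neg hne.symm]
    rw [map_sub, inner_sub_left, real_inner_comm (toL2 (Y m)) (toL2 (∑' n, _)),
      hcoeff.unique (hasSum_ite_eq m _), sub_self]
  rw [hseries]
  exact (norm_tsum_le_tsum_norm hsum).trans
    (Real.tsum_le_of_sum_range_le (fun _ => norm_nonneg _) hB)

theorem norm_partialSum_sub_aeval_le {C κ ε : ℝ} {R : C(Icc a b, ℝ) →L[ℝ] C(Icc a b, ℝ)}
    (hR : IsResolvent C q α β κ R) {N : ℕ} (hκ : κ ^ 2 = lam N) (hpos : 0 < lam 0 + κ ^ 2)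
    {p : Polynomial ℝ} (hp : ∀ m, ∑ n ∈ Finset.range m,
      |cutoff (κ ^ 2 / (lam n + κ ^ 2)) - p.eval (κ ^ 2 / (lam n + κ ^ 2))| *
        (|⟪toL2 f, toL2 (Y n)⟫_ℝ| * ‖Y n‖) ≤ ε) :
    ‖partialSum Y f N - Polynomial.aeval (κ ^ 2 • R) p f‖ ≤ ε := by
  refine hS.norm_le_of_sum_range_le fun m => (Finset.sum_le_sum fun n _ => le_of_eq ?_).trans (hp m)
  have hposn : 0 < lam n + κ ^ 2 := by linarith [hS.strictMono.monotone n.zero_le]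
  have hcutoff : cutoff (κ ^ 2 / (lam n + κ ^ 2)) = if n < N then 1 else 0 := by
    rw [cutoff_div_add hposn]
    simp only [hκ, hS.strictMono.lt_iff_lt]
  rw [map_sub, inner_sub_left, hS.inner_toL2_partialSum,
    hR.inner_toL2_aeval (hS.isEigensolution n) hposn.ne', ← sub_mul, abs_mul, mul_assoc, hcutoff]

theorem exists_pos_eventually_abs_inner_mul_norm_le
    (hf : BoundedVariationOn (extend f) (Icc a b)) :
    ∃ C > 0, ∀ᶠ n in atTop, |⟪toL2 f, toL2 (Y n)⟫_ℝ| * ‖Y n‖ ≤ C / √(lam n) := by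
  obtain ⟨C, hC⟩ := exists_eventually_norm_le_and_abs_integral_le q α β
  set V := |extend f b| + (eVariationOn (extend f) (Icc a b)).toReal
  have hV : 0 ≤ V := by positivity
  refine ⟨C * V * C + 1, by nlinarith [mul_nonneg hV (mul_self_nonneg C)], ?_⟩
  filter_upwards [hS.tendsto_sqrt.eventually hC,
    hS.tendsto_atTop.eventually_gt_atTop 0] with n hn hlam
  have hsol : IsEigensolution q α β (√(lam n) ^ 2) (Y n) := by
    rw [Real.sq_sqrt hlam.le]
    exact hS.isEigensolution n
  obtain ⟨hsup, hint⟩ := hn _ hsol (hS.norm_toL2 n)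
  have hcoeff : |⟪toL2 f, toL2 (Y n)⟫_ℝ| ≤ C / √(lam n) * V := by
    rw [real_inner_comm, inner_toL2]
    exact abs_integral_mul_le_of_boundedVariationOn hab.out.le (continuous_extend _)
      (continuous_extend _) hf hint
  have hC0 : 0 ≤ C := (norm_nonneg _).trans hsup
  calc |⟪toL2 f, toL2 (Y n)⟫_ℝ| * ‖Y n‖ ≤ C / √(lam n) * V * C := by gcongr
    _ = C * V * C / √(lam n) := by ring
    _ ≤ (C * V * C + 1) / √(lam n) := by gcongr; linarith

theorem exists_pos_eventually_sqrt_add_le :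
    ∃ δ > 0, ∀ᶠ n in atTop, √(lam n) + δ ≤ √(lam (n + 1)) := by
  obtain ⟨δ, hδ, hgap⟩ := exists_pos_eventually_le_sub q α β
  refine ⟨δ, hδ, ?_⟩
  filter_upwards [hS.tendsto_sqrt.eventually hgap,
    hS.tendsto_atTop.eventually_gt_atTop 0] with n hn hlam
  have hlt := hS.strictMono n.lt_succ_self
  have hsol : ∀ m, 0 < lam m → IsEigensolution q α β (√(lam m) ^ 2) (Y m) := fun m hm => by
    rw [Real.sq_sqrt hm.le]
    exact hS.isEigensolution m
  have := hn √(lam (n + 1)) (Real.sqrt_le_sqrt hlt.le) _ _ (hS.ne_zero n) (hS.ne_zero (n + 1))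
    (hsol n hlam) (hsol (n + 1) (hlam.trans hlt)) (hS.orthonormal.2 n.succ_ne_self.symm)
  linarith

theorem exists_polynomial_eventually_norm_partialSum_sub_le
    (hf : BoundedVariationOn (extend f) (Icc a b)) {C ε : ℝ}
    {R : ℝ → C(Icc a b, ℝ) →L[ℝ] C(Icc a b, ℝ)}
    (hR : ∀ᶠ κ in atTop, IsResolvent C q α β κ (R κ)) (hε : 0 < ε) :
    ∃ p : Polynomial ℝ, p.eval 1 = 1 ∧ ∀ᶠ N in atTop,
      ‖partialSum Y f N - Polynomial.aeval (√(lam N) ^ 2 • R √(lam N)) p f‖ ≤ ε := by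
  obtain ⟨M, hM, hcoeff⟩ := hS.exists_pos_eventually_abs_inner_mul_norm_le hf
  obtain ⟨δ, hδ, hgap⟩ := hS.exists_pos_eventually_sqrt_add_le
  obtain ⟨p, hp1, hp⟩ := exists_polynomial_eventually_sum_range_le hS.tendsto_atTop hδ hgap
    (fun n => mul_nonneg (abs_nonneg ⟪toL2 f, toL2 (Y n)⟫_ℝ) (norm_nonneg (Y n))) hcoeff hM hε
  refine ⟨p, hp1, ?_⟩
  filter_upwards [hS.tendsto_sqrt.eventually hp, hS.tendsto_sqrt.eventually hR,
    hS.tendsto_atTop.eventually_gt_atTop 0, hS.tendsto_atTop.eventually_gt_atTop (-lam 0)]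
    with N hpN hRN hpos hpos₀
  have hsq : √(lam N) ^ 2 = lam N := Real.sq_sqrt hpos.le
  exact hS.norm_partialSum_sub_aeval_le hRN hsq (by rw [hsq]; linarith) hpN

theorem tendstoLocallyUniformlyOn_extend_partialSum
    (hf : BoundedVariationOn (extend f) (Icc a b)) :
    TendstoLocallyUniformlyOn (fun N => extend (partialSum Y f N)) (extend f) atTop (Ioo a b) := by
  obtain ⟨R, hR⟩ := exists_eventually_isResolvent α β q
  rw [Metric.tendstoLocallyUniformlyOn_iff]
  intro ε hε x hx
  obtain ⟨p, hp1, hp⟩ := hS.exists_polynomial_eventually_norm_partialSum_sub_le hf hR (half_pos hε)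
  have hlocal := tendstoLocallyUniformlyOn_aeval_smul_resolvent (by norm_num) hR f p
  rw [hp1, one_smul, Metric.tendstoLocallyUniformlyOn_iff] at hlocal
  obtain ⟨t, ht, hclose⟩ := hlocal (ε / 2) (half_pos hε) x hx
  refine ⟨t, ht, ?_⟩
  filter_upwards [hp, hS.tendsto_sqrt.eventually hclose] with N hpN hcloseN z hz
  set g := Polynomial.aeval (√(lam N) ^ 2 • R √(lam N)) p f
  calc dist (extend f z) (extend (partialSum Y f N) z)
      ≤ dist (extend f z) (extend g z) + dist (extend g z) (extend (partialSum Y f N) z) :=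
        dist_triangle _ _ _
    _ < ε / 2 + ε / 2 := by
        refine add_lt_add_of_lt_of_le (hcloseN z hz) ?_
        rw [dist_comm, Real.dist_eq, ← extend_sub]
        exact (abs_extend_le_norm _ z).trans hpN
    _ = ε := add_halves ε

end IsEigensystem

theorem exists_isEigensystem {q : C(Icc a b, ℝ)} {p : ℝ → ℝ} (hp : EqOn (extend q) p (Icc a b))
    {α β : ℝ} {lam : ℕ → ℝ} {y : ℕ → ℝ → ℝ} (heig : ∀ n, IsSLEigenpair a b p α β (lam n) (y n))
    (hmono : StrictMono lam) (hcomplete : ∀ μ z, IsSLEigenpair a b p α β μ z → ∃ n, lam n = μ)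
    (hnorm : ∀ n, ∫ x in a..b, y n x ^ 2 = 1) :
    ∃ Y, (∀ n, EqOn (extend (Y n)) (y n) (Icc a b)) ∧ IsEigensystem q α β lam Y := by
  choose Y hY hsol using fun n => exists_isEigensolution_of_isSLEigenpair hp (heig n)
  refine ⟨Y, hY, hsol, fun n => ?_, hmono, fun μ v hv0 hv =>
    hcomplete μ _ (isSLEigenpair_of_isEigensolution hp hv0 hv)⟩
  have hsq : ‖toL2 (Y n)‖ ^ 2 = 1 := by
    rw [norm_toL2_sq, ← hnorm n]
    refine intervalIntegral.integral_congr fun x hx => ?_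
    rw [uIcc_of_le hab.out.le] at hx
    simp only [hY n hx]
  exact (pow_eq_one_iff_of_nonneg (norm_nonneg _) two_ne_zero).1 hsq

theorem inner_toL2_of_eqOn {f g : C(Icc a b, ℝ)} {F G : ℝ → ℝ} (hf : EqOn (extend f) F (Icc a b))
    (hg : EqOn (extend g) G (Icc a b)) : ⟪toL2 f, toL2 g⟫_ℝ = ∫ x in a..b, G x * F x := by
  rw [inner_toL2]
  refine intervalIntegral.integral_congr fun x hx => ?_
  rw [uIcc_of_le hab.out.le] at hx
  simp only [hf hx, hg hx, mul_comm]

theorem tendstoLocallyUniformlyOn_sum_range {q f : ℝ → ℝ} (hq : ContinuousOn q (Icc a b))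
    {α β : ℝ} {lam : ℕ → ℝ} {y : ℕ → ℝ → ℝ} (heig : ∀ n, IsSLEigenpair a b q α β (lam n) (y n))
    (hmono : StrictMono lam) (hcomplete : ∀ μ z, IsSLEigenpair a b q α β μ z → ∃ n, lam n = μ)
    (hnorm : ∀ n, ∫ x in a..b, y n x ^ 2 = 1) (hf : ContinuousOn f (Icc a b))
    (hbv : BoundedVariationOn f (Icc a b)) :
    TendstoLocallyUniformlyOn
      (fun N x => ∑ n ∈ Finset.range N, (∫ t in a..b, y n t * f t) * y n x) f atTop (Ioo a b) := by
  have hF := extend_restrictIcc hf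
  obtain ⟨Y, hY, hS⟩ :=
    exists_isEigensystem (extend_restrictIcc hq) heig hmono hcomplete hnorm
  have hFbv : BoundedVariationOn (extend (restrictIcc hf)) (Icc a b) := by
    rwa [BoundedVariationOn, eVariationOn.eq_of_eqOn hF]
  refine ((hS.tendstoLocallyUniformlyOn_extend_partialSum hFbv).congr fun N x hx => ?_).congr_right
    (hF.mono Ioo_subset_Icc_self)
  have hx' := Ioo_subset_Icc_self hx
  simp only [extend_partialSum Y _ N hx']
  exact Finset.sum_congr rfl fun n _ => by rw [inner_toL2_of_eqOn hF (hY n), hY n hx']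

end Expansion

end SturmLiouville

/-- For `f` continuous and of bounded variation on `[a,b]`, the eigenfunction
expansion `∑ cₙ yₙ(x)` converges to `f(x)` at each `x ∈ (a,b)`, uniformly on
every compact subset of `(a,b)`. -/
theorem sl_expansion_converges_interior
    (a b : ℝ) (hab : a < b)
    (q : ℝ → ℝ) (hq : ContinuousOn q (Set.Icc a b))
    (α β : ℝ) (hα : α ∈ Set.Ico 0 (2 * Real.pi)) (hβ : β ∈ Set.Ico 0 (2 * Real.pi))
    (lam : ℕ → ℝ) (y : ℕ → ℝ → ℝ)
    (heig : ∀ n, IsSLEigenpair a b q α β (lam n) (y n))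
    (hmono : StrictMono lam)
    (hcomplete : ∀ μ z, IsSLEigenpair a b q α β μ z → ∃ n, lam n = μ)
    (hnorm : ∀ n, ∫ x in a..b, (y n x) ^ 2 = 1)
    (f : ℝ → ℝ) (hf : ContinuousOn f (Set.Icc a b))
    (hbv : BoundedVariationOn f (Set.Icc a b))
    (c : ℕ → ℝ) (hc : ∀ n, c n = ∫ x in a..b, y n x * f x) :
    (∀ x ∈ Set.Ioo a b,
      Filter.Tendsto (fun N : ℕ => ∑ n ∈ Finset.range N, c n * y n x)
        Filter.atTop (nhds (f x))) ∧
    (∀ K ⊆ Set.Ioo a b, IsCompact K →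
      TendstoUniformlyOn (fun (N : ℕ) (x : ℝ) => ∑ n ∈ Finset.range N, c n * y n x)
        f Filter.atTop K) := by
  have : Fact (a < b) := ⟨hab⟩
  have hlocal := SturmLiouville.tendstoLocallyUniformlyOn_sum_range hq heig hmono hcomplete hnorm
    hf hbv
  simp only [← hc] at hlocal
  exact ⟨fun x hx => hlocal.tendsto_at hx,
    (tendstoLocallyUniformlyOn_iff_forall_isCompact isOpen_Ioo).1 hlocal⟩
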